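/- arXiv:1904.01919 — 2 statements merged into one kernel-verified Lean document; each statement's English description precedes it below -/
import Mathlib

section
/- Suppose 0 < s ≤ 1 and let g be holomorphic on the unit disc D. Then the Volterra operator T_g maps the Besov space B^1 into Q_s if and only if g ∈ Q_s. -/
open MeasureTheory Metric Complex Real Filter Set

noncomputable section

/-- `f` is holomorphic on the open unit disc. -/
def HolOn (f : ℂ → ℂ) : Prop := DifferentiableOn ℂ f (Metric.ball (0:ℂ) 1)

/-- The normalized Lebesgue area measure on `ℂ` (so the unit disc has total mass 1). -/
def dA : Measure ℂ := (ENNReal.ofReal π)⁻¹ • volume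

/-- Bounded holomorphic functions on the unit disc. -/
def Hinf : Set (ℂ → ℂ) :=
  {f | HolOn f ∧ ∃ C : ℝ, ∀ z ∈ Metric.ball (0:ℂ) 1, norm (f z) ≤ C}

/-- The Bloch space. -/
def Bloch : Set (ℂ → ℂ) :=
  {f | HolOn f ∧ ∃ C : ℝ, ∀ z ∈ Metric.ball (0:ℂ) 1,
      (1 - norm z ^ 2) * norm (deriv f z) ≤ C}

/-- The little Bloch space: `(1-|z|²)|f'(z)| → 0` as `|z| → 1⁻`. -/
def littleBloch : Set (ℂ → ℂ) :=
  {f | HolOn f ∧ ∀ ε : ℝ, 0 < ε → ∃ r : ℝ, r < 1 ∧ ∀ z ∈ Metric.ball (0:ℂ) 1,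
      r < norm z → (1 - norm z ^ 2) * norm (deriv f z) < ε}

/-- The `α`-logarithmic Bloch space. -/
def BlochLog (α : ℝ) : Set (ℂ → ℂ) :=
  {f | HolOn f ∧ ∃ C : ℝ, ∀ z ∈ Metric.ball (0:ℂ) 1,
      (1 - norm z ^ 2) * (Real.log (2 / (1 - norm z ^ 2))) ^ α *
        norm (deriv f z) ≤ C}

/-- The Besov space `B¹`: holomorphic `f` with `∫_D |f''| dA < ∞`. -/
def Besov1 : Set (ℂ → ℂ) :=
  {f | HolOn f ∧ ∫⁻ z in Metric.ball (0:ℂ) 1,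
      ENNReal.ofReal (norm (deriv (deriv f) z)) ∂dA < ⊤}

/-- The Besov space `Bᵖ` (`1 < p < ∞`): `∫_D (1-|z|)^(p-2) |f'(z)|^p dA(z) < ∞`. -/
def Besov (p : ℝ) : Set (ℂ → ℂ) :=
  {f | HolOn f ∧ ∫⁻ z in Metric.ball (0:ℂ) 1,
      ENNReal.ofReal ((1 - norm z) ^ (p - 2) * norm (deriv f z) ^ p) ∂dA < ⊤}

open scoped Classical in
/-- The Besov space `Bᵖ` for all `1 ≤ p < ∞` (with the special definition at `p = 1`). -/
def BesovFull (p : ℝ) : Set (ℂ → ℂ) := if p = 1 then Besov1 else Besov p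

/-- The Möbius transformation `φ_a(z) = (a-z)/(1 - conj a · z)`. -/
def phi (a z : ℂ) : ℂ := (a - z) / (1 - (starRingEnd ℂ) a * z)

/-- The space `Q_s`. -/
def Qs (s : ℝ) : Set (ℂ → ℂ) :=
  {f | HolOn f ∧ ⨆ a ∈ Metric.ball (0:ℂ) 1, ∫⁻ z in Metric.ball (0:ℂ) 1,
      ENNReal.ofReal (norm (deriv f z) ^ 2 *
        (1 - norm (phi a z) ^ 2) ^ s) ∂dA < ⊤}

/-- The space `Q_{s,log,α}`. -/
def QsLog (s α : ℝ) : Set (ℂ → ℂ) :=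
  {f | HolOn f ∧ ⨆ a ∈ Metric.ball (0:ℂ) 1,
      (ENNReal.ofReal ((Real.log (2 / (1 - norm a))) ^ (2 * α)) *
        ∫⁻ z in Metric.ball (0:ℂ) 1,
          ENNReal.ofReal (norm (deriv f z) ^ 2 *
            (1 - norm (phi a z) ^ 2) ^ s) ∂dA) < ⊤}

/-- The Volterra operator `T_g(f)(z) = ∫_0^z g'(ξ) f(ξ) dξ` (along the segment from 0 to z). -/
def Tg (g f : ℂ → ℂ) : ℂ → ℂ :=
  fun z => z * ∫ t in (0:ℝ)..1, deriv g ((t : ℂ) * z) * f ((t : ℂ) * z)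

/-- The companion operator `I_g(f)(z) = ∫_0^z g(ξ) f'(ξ) dξ` (along the segment from 0 to z). -/
def Ig (g f : ℂ → ℂ) : ℂ → ℂ :=
  fun z => z * ∫ t in (0:ℝ)..1, g ((t : ℂ) * z) * deriv f ((t : ℂ) * z)

/-- The multiplication operator `M_g(f) = g · f`. -/
def Mg (g f : ℂ → ℂ) : ℂ → ℂ := fun z => g z * f z

/-- `T` maps `X` into `Y`. -/
def MapsInto (T : (ℂ → ℂ) → (ℂ → ℂ)) (X Y : Set (ℂ → ℂ)) : Prop :=
  ∀ f ∈ X, T f ∈ Y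

/-- The Hardy space `H^q`. -/
def Hardy (q : ℝ) : Set (ℂ → ℂ) :=
  {f | HolOn f ∧ ∃ C : ℝ, ∀ r : ℝ, 0 < r → r < 1 →
      (1 / (2 * π)) * ∫ t in (0:ℝ)..(2 * π),
        norm (f ((r : ℂ) * Complex.exp ((t : ℂ) * Complex.I))) ^ q ≤ C}

/-- An inner function: bounded holomorphic with radial boundary values of modulus 1 a.e. -/
def IsInner (g : ℂ → ℂ) : Prop :=
  g ∈ Hinf ∧ ∀ᵐ t : ℝ ∂(volume.restrict (Set.Ioc (0:ℝ) (2 * π))),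
    Filter.Tendsto (fun r : ℝ => norm (g ((r : ℂ) * Complex.exp ((t : ℂ) * Complex.I))))
      (nhdsWithin 1 (Set.Iio 1)) (nhds 1)

/-- `X` has the f-property (division by inner functions). -/
def FProperty (X : Set (ℂ → ℂ)) : Prop :=
  ∀ h ∈ X, ∀ g : ℂ → ℂ, IsInner g →
    (fun z => h z / g z) ∈ Hardy 1 → (fun z => h z / g z) ∈ X

/-- The space of multipliers `M(X,Y)`. -/
def Mult (X Y : Set (ℂ → ℂ)) : Set (ℂ → ℂ) :=
  {g | HolOn g ∧ ∀ f ∈ X, (fun z => g z * f z) ∈ Y}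

end


lemma aux_mem {z : ℂ} (hz : z ∈ Metric.ball (0:ℂ) 1) {t : ℝ} (h0 : 0 ≤ t) (h1 : t ≤ 1) :
    (t : ℂ) * z ∈ Metric.ball (0:ℂ) 1 := by
  rw [mem_ball_zero_iff] at hz ⊢
  rw [norm_mul, Complex.norm_real, Real.norm_of_nonneg h0]
  nlinarith [norm_nonneg z]

lemma tg_deriv {g f : ℂ → ℂ} (hg : HolOn g) (hf : HolOn f) {z : ℂ}
    (hz : z ∈ Metric.ball (0:ℂ) 1) :
    HasDerivAt (Tg g f) (deriv g z * f z) z := by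
  have hgd : DifferentiableOn ℂ (deriv g) (Metric.ball (0:ℂ) 1) := hg.deriv isOpen_ball
  have hd : DifferentiableOn ℂ (fun w => deriv g w * f w) (Metric.ball (0:ℂ) 1) := hgd.mul hf
  obtain ⟨F, hF⟩ := hd.isExactOn_ball
  have key : ∀ w ∈ Metric.ball (0:ℂ) 1, Tg g f w = F w - F 0 := by
    intro w hw
    have h1 : ∀ t ∈ Set.uIcc (0:ℝ) 1, HasDerivAt (fun t : ℝ => F ((t:ℂ) * w))
        (deriv g ((t : ℂ) * w) * f ((t : ℂ) * w) * w) t := by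
      intro t ht
      rw [Set.uIcc_of_le zero_le_one] at ht
      have h2 : HasDerivAt (fun t : ℝ => (t:ℂ) * w) (1 * w) t :=
        (Complex.ofRealCLM.hasDerivAt (x := t)).mul_const w
      have := (hF _ (aux_mem hw ht.1 ht.2)).comp t h2
      rw [one_mul] at this
      exact this
    have hc : ContinuousOn (fun t : ℝ => deriv g ((t : ℂ) * w) * f ((t : ℂ) * w) * w)
        (Set.uIcc (0:ℝ) 1) := by
      refine ContinuousOn.mul ?_ continuousOn_const
      refine hd.continuousOn.comp (f := fun t : ℝ => (t:ℂ) * w) (by fun_prop) ?_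
      intro t ht
      rw [Set.uIcc_of_le zero_le_one] at ht
      exact aux_mem hw ht.1 ht.2
    have h3 := intervalIntegral.integral_eq_sub_of_hasDerivAt h1 hc.intervalIntegrable
    rw [intervalIntegral.integral_mul_const] at h3
    simp only [Complex.ofReal_one, one_mul, Complex.ofReal_zero, zero_mul] at h3
    rw [← h3, Tg, mul_comm]
  have h4 : HasDerivAt (fun w => F w - F 0) (deriv g z * f z) z := (hF z hz).sub_const _
  refine h4.congr_of_eventuallyEq ?_
  filter_upwards [isOpen_ball.mem_nhds hz] with w hw using key w hw

lemma tg_hol {g f : ℂ → ℂ} (hg : HolOn g) (hf : HolOn f) : HolOn (Tg g f) :=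
  fun _ hz => (tg_deriv hg hf hz).differentiableAt.differentiableWithinAt

/-- Cauchy estimate. -/
lemma cauchy_est {h : ℂ → ℂ} (hh : HolOn h) {z : ℂ} (hz : z ∈ Metric.ball (0:ℂ) 1)
    {r : ℝ} (hr0 : 0 < r) (hr1 : r < 1) :
    (1 - r ^ 2) * ‖h (((r ^ 2 : ℝ) : ℂ) * z)‖ ≤
      π⁻¹ * ∫ θ in (-π)..π, ‖h (circleMap 0 r θ)‖ := by
  have hz' : ‖z‖ < 1 := by simpa using hz
  set w : ℂ := ((r ^ 2 : ℝ) : ℂ) * z with hw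
  have hwn : ‖w‖ ≤ r ^ 2 := by
    rw [hw, norm_mul, Complex.norm_real, Real.norm_of_nonneg (by positivity)]
    nlinarith [norm_nonneg z, sq_nonneg r]
  have hsub : Metric.closedBall (0:ℂ) r ⊆ Metric.ball (0:ℂ) 1 := closedBall_subset_ball hr1
  have hcm : ∀ θ, circleMap 0 r θ ∈ Metric.ball (0:ℂ) 1 := fun θ =>
    hsub (circleMap_mem_closedBall 0 hr0.le θ)
  have hcont : Continuous fun θ => h (circleMap 0 r θ) :=
    hh.continuousOn.comp_continuous (continuous_circleMap 0 r) hcm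
  have hwm : w ∈ Metric.ball (0:ℂ) r := by
    rw [mem_ball_zero_iff]; nlinarith
  have hC := Complex.two_pi_I_inv_smul_circleIntegral_sub_inv_smul_of_differentiable_on_off_countable
    Set.countable_empty hwm (hh.continuousOn.mono hsub)
    (fun x hx => hh.differentiableAt (isOpen_ball.mem_nhds
      (hsub (ball_subset_closedBall hx.1))))
  have hper : ∫ θ in (0:ℝ)..(2 * π), ‖h (circleMap 0 r θ)‖
      = ∫ θ in (-π)..π, ‖h (circleMap 0 r θ)‖ := by
    have hp : Function.Periodic (fun θ => ‖h (circleMap 0 r θ)‖) (2 * π) := by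
      intro θ
      simp only [periodic_circleMap 0 r θ]
    have := hp.intervalIntegral_add_eq 0 (-π)
    rw [zero_add, show -π + 2 * π = π by ring] at this
    exact this
  have hci : ‖∮ z in C(0, r), (z - w)⁻¹ • h z‖ ≤
      ∫ θ in (0:ℝ)..(2 * π), (1 - r)⁻¹ * ‖h (circleMap 0 r θ)‖ := by
    rw [circleIntegral]
    refine intervalIntegral.norm_integral_le_of_norm_le (by positivity) ?_
      ((continuous_const.mul hcont.norm).intervalIntegrable _ _)
    refine Filter.Eventually.of_forall fun θ _ => ?_
    have h1 : r * (1 - r) ≤ ‖circleMap 0 r θ - w‖ := by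
      have h2 := norm_sub_norm_le (circleMap 0 r θ) w
      have h3 : ‖circleMap 0 r θ‖ = r := by
        rw [norm_circleMap_zero, abs_of_pos hr0]
      nlinarith
    have hpos : 0 < r * (1 - r) := mul_pos hr0 (by linarith)
    rw [norm_smul, norm_smul, norm_inv, deriv_circleMap, norm_mul, Complex.norm_I,
      norm_circleMap_zero, abs_of_pos hr0, mul_one, ← mul_assoc]
    gcongr
    calc r * ‖circleMap 0 r θ - w‖⁻¹ ≤ r * (r * (1 - r))⁻¹ := by gcongr
      _ = (1 - r)⁻¹ := by field_simp
  rw [intervalIntegral.integral_const_mul, hper] at hci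
  have hn : ‖h w‖ ≤ (2 * π)⁻¹ * ((1 - r)⁻¹ * ∫ θ in (-π)..π, ‖h (circleMap 0 r θ)‖) := by
    rw [← hC, norm_smul]
    have : ‖(2 * π * I : ℂ)⁻¹‖ = (2 * π)⁻¹ := by
      simp [abs_of_pos Real.pi_pos]
    rw [this]
    gcongr
  set J := ∫ θ in (-π)..π, ‖h (circleMap 0 r θ)‖ with hJ
  have hJ0 : 0 ≤ J := intervalIntegral.integral_nonneg (by linarith [Real.pi_pos])
    fun _ _ => norm_nonneg _
  have h1r : 0 < 1 - r := by linarith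
  calc (1 - r ^ 2) * ‖h w‖ ≤ (2 * (1 - r)) * ((2 * π)⁻¹ * ((1 - r)⁻¹ * J)) := by
        gcongr
        nlinarith
    _ = π⁻¹ * J := by field_simp

lemma polar_bound (h : ℂ → ℂ) (hm : Measurable h) :
    ∫⁻ r in Set.Ioo (0:ℝ) 1, ENNReal.ofReal r *
      ∫⁻ θ in Set.Ioo (-π) π, ‖h (circleMap 0 r θ)‖ₑ
    ≤ ∫⁻ z in Metric.ball (0:ℂ) 1, ‖h z‖ₑ := by
  rw [← lintegral_indicator measurableSet_ball, ← Complex.lintegral_comp_polarCoord_symm,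
    polarCoord_target, Measure.volume_eq_prod, setLIntegral_prod]
  · calc _ ≤ ∫⁻ r in Set.Ioo (0:ℝ) 1, ∫⁻ θ in Set.Ioo (-π) π, ENNReal.ofReal r •
          (Metric.ball (0:ℂ) 1).indicator (fun z => ‖h z‖ₑ) (Complex.polarCoord.symm (r, θ)) := by
          refine setLIntegral_mono' measurableSet_Ioo fun r hr => ?_
          rw [← lintegral_const_mul' _ _ ENNReal.ofReal_ne_top]
          refine lintegral_mono fun θ => ?_
          have h1 : Complex.polarCoord.symm (r, θ) = circleMap 0 r θ := by
            rw [Complex.polarCoord_symm_apply, circleMap, Complex.exp_mul_I]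
            simp
          have h2 : circleMap 0 r θ ∈ Metric.ball (0:ℂ) 1 := by
            rw [mem_ball_zero_iff, norm_circleMap_zero, abs_of_pos hr.1]; exact hr.2
          simp only [h1, Set.indicator_of_mem h2, smul_eq_mul, le_refl]
      _ ≤ _ := lintegral_mono_set Set.Ioo_subset_Ioi_self
  · have h0 : Measurable ((Metric.ball (0:ℂ) 1).indicator (fun z => ‖h z‖ₑ)) :=
      hm.enorm.indicator measurableSet_ball
    have h1 : Measurable fun p : ℝ × ℝ => Complex.polarCoord.symm p := by
      simp only [Complex.polarCoord_symm_apply]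
      fun_prop
    refine Measurable.aemeasurable ?_
    simp only [smul_eq_mul]
    exact (ENNReal.measurable_ofReal.comp measurable_fst).mul (h0.comp h1)

lemma besov_bounded {f : ℂ → ℂ} (hf : f ∈ Besov1) :
    ∃ C : ℝ, 0 ≤ C ∧ ∀ z ∈ Metric.ball (0:ℂ) 1, ‖f z‖ ≤ C := by
  obtain ⟨hf, hfin⟩ := hf
  have hd1 : HolOn (deriv f) := DifferentiableOn.deriv hf isOpen_ball
  have hd2 : HolOn (deriv (deriv f)) := DifferentiableOn.deriv hd1 isOpen_ball
  set h := deriv (deriv f) with hh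
  have hB : ∫⁻ z in Metric.ball (0:ℂ) 1, ‖h z‖ₑ < ⊤ := by
    rw [dA, Measure.restrict_smul, lintegral_smul_measure] at hfin
    simp only [ofReal_norm] at hfin
    rw [smul_eq_mul] at hfin
    by_contra hcon
    rw [not_lt, top_le_iff] at hcon
    rw [hcon, ENNReal.mul_top] at hfin
    · exact lt_irrefl _ hfin
    · simp
  set B := ∫⁻ z in Metric.ball (0:ℂ) 1, ‖h z‖ₑ with hBdef
  refine ⟨‖f 0‖ + ‖deriv f 0‖ + (ENNReal.ofReal (2 * π⁻¹) * B).toReal, by positivity, ?_⟩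
  intro z hz
  have hz1 : ‖z‖ < 1 := by simpa using hz
  have hmem : ∀ t ∈ Set.Icc (0:ℝ) 1, ((t ^ 2 : ℝ) : ℂ) * z ∈ Metric.ball (0:ℂ) 1 := by
    intro t ht
    exact aux_mem hz (by positivity) (by nlinarith [ht.1, ht.2])
  set G' : ℝ → ℂ := fun r => ((2 * r * (1 - r ^ 2) : ℝ) : ℂ) * z ^ 2 *
    h (((r ^ 2 : ℝ) : ℂ) * z) with hG'
  have hG : ∀ t ∈ Set.uIcc (0:ℝ) 1, HasDerivAt (fun r : ℝ => f (((r ^ 2 : ℝ) : ℂ) * z) +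
      ((1 - r ^ 2 : ℝ) : ℂ) * z * deriv f (((r ^ 2 : ℝ) : ℂ) * z)) (G' t) t := by
    intro t ht
    rw [Set.uIcc_of_le zero_le_one] at ht
    have hm := hmem t ht
    have e0 : HasDerivAt (fun r : ℝ => r ^ 2) (2 * t) t := by
      simpa using hasDerivAt_pow 2 t
    have e1 : HasDerivAt (fun r : ℝ => ((r ^ 2 : ℝ) : ℂ) * z) (((2 * t : ℝ) : ℂ) * z) t :=
      e0.ofReal_comp.mul_const z
    have e2 : HasDerivAt (fun r : ℝ => ((1 - r ^ 2 : ℝ) : ℂ) * z) (((-(2 * t) : ℝ) : ℂ) * z) t :=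
      (e0.const_sub 1).ofReal_comp.mul_const z
    have e3 := ((hf.differentiableAt (isOpen_ball.mem_nhds hm)).hasDerivAt).comp t e1
    have e4 := ((hd1.differentiableAt (isOpen_ball.mem_nhds hm)).hasDerivAt).comp t e1
    have e5 := e3.add (e2.mul e4)
    refine HasDerivAt.congr_deriv e5 ?_
    simp only [hG', hh, Function.comp]
    push_cast
    ring
  have hc : ContinuousOn G' (Set.uIcc (0:ℝ) 1) := by
    refine ContinuousOn.mul (by fun_prop) ?_
    refine hd2.continuousOn.comp (f := fun t : ℝ => ((t ^ 2 : ℝ) : ℂ) * z) (by fun_prop) ?_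
    intro t ht
    rw [Set.uIcc_of_le zero_le_one] at ht
    exact hmem t ht
  have hI := intervalIntegral.integral_eq_sub_of_hasDerivAt hG hc.intervalIntegrable
  simp only [one_pow, Complex.ofReal_one, one_mul, sub_self, Complex.ofReal_zero, zero_mul,
    add_zero, ne_eq, OfNat.ofNat_ne_zero, not_false_eq_true, zero_pow, sub_zero] at hI
  have hbound : ‖∫ r in (0:ℝ)..1, G' r‖ₑ ≤ ENNReal.ofReal (2 * π⁻¹) * B := by
    rw [intervalIntegral.integral_of_le zero_le_one, integral_Ioc_eq_integral_Ioo]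
    refine (enorm_integral_le_lintegral_enorm _).trans ?_
    refine le_trans ?_ (mul_le_mul_right (polar_bound h (measurable_deriv _)) _)
    rw [← lintegral_const_mul' _ _ ENNReal.ofReal_ne_top]
    refine setLIntegral_mono' measurableSet_Ioo fun r hr => ?_
    have hcm : ∀ θ, circleMap 0 r θ ∈ Metric.ball (0:ℂ) 1 := fun θ => by
      rw [mem_ball_zero_iff, norm_circleMap_zero, abs_of_pos hr.1]; exact hr.2
    have hcont : Continuous fun θ => h (circleMap 0 r θ) :=
      hd2.continuousOn.comp_continuous (continuous_circleMap 0 r) hcm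
    have hint : ∫⁻ θ in Set.Ioo (-π) π, ‖h (circleMap 0 r θ)‖ₑ =
        ENNReal.ofReal (∫ θ in (-π)..π, ‖h (circleMap 0 r θ)‖) := by
      rw [intervalIntegral.integral_of_le (by linarith [Real.pi_pos]),
        integral_Ioc_eq_integral_Ioo, ofReal_integral_norm_eq_lintegral_enorm]
      exact (hcont.integrableOn_Icc (a := -π) (b := π)).mono_set Set.Ioo_subset_Icc_self
    rw [hint, ← ENNReal.ofReal_mul hr.1.le, ← ENNReal.ofReal_mul (by positivity),
      ← ofReal_norm]
    apply ENNReal.ofReal_le_ofReal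
    have hce := cauchy_est hd2 hz hr.1 hr.2
    have h1r : 0 ≤ 1 - r ^ 2 := by nlinarith [hr.1, hr.2]
    have hr0 := hr.1.le
    rw [hG']
    simp only
    rw [norm_mul, norm_mul, Complex.norm_real, norm_pow, Real.norm_of_nonneg (by positivity)]
    calc 2 * r * (1 - r ^ 2) * ‖z‖ ^ 2 * ‖h (((r ^ 2 : ℝ) : ℂ) * z)‖
        ≤ 2 * r * (1 - r ^ 2) * 1 * ‖h (((r ^ 2 : ℝ) : ℂ) * z)‖ := by
          gcongr
          exact pow_le_one₀ (norm_nonneg _) hz1.le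
      _ = 2 * r * ((1 - r ^ 2) * ‖h (((r ^ 2 : ℝ) : ℂ) * z)‖) := by ring
      _ ≤ 2 * r * (π⁻¹ * ∫ θ in (-π)..π, ‖h (circleMap 0 r θ)‖) := by gcongr
      _ = _ := by ring
  have hb2 : ‖∫ r in (0:ℝ)..1, G' r‖ ≤ (ENNReal.ofReal (2 * π⁻¹) * B).toReal := by
    have := ENNReal.toReal_mono (ENNReal.mul_ne_top ENNReal.ofReal_ne_top hB.ne) hbound
    simpa using this
  have hfz : f z = f 0 + z * deriv f 0 + ∫ r in (0:ℝ)..1, G' r := by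
    rw [hI]; ring
  rw [hfz]
  refine (norm_add₃_le).trans ?_
  gcongr
  rw [norm_mul]
  nlinarith [norm_nonneg (deriv f 0)]

/-- For `0 < s ≤ 1` and `g` holomorphic on the unit disc, `T_g` maps `B¹`
into `Q_s` iff `g ∈ Q_s`. -/
theorem stmt5 (s : ℝ) (hs0 : 0 < s) (hs1 : s ≤ 1) (g : ℂ → ℂ) (hg : HolOn g) :
    MapsInto (Tg g) Besov1 (Qs s) ↔ g ∈ Qs s := by
  constructor
  · intro H
    have h1 : (fun _ => 1 : ℂ → ℂ) ∈ Besov1 := by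
      refine ⟨differentiableOn_const _, ?_⟩
      simp
    refine ⟨hg, lt_of_le_of_lt (le_of_eq ?_) (H _ h1).2⟩
    refine iSup_congr fun a => iSup_congr fun ha => ?_
    refine setLIntegral_congr_fun measurableSet_ball fun z hz => ?_
    simp only [(tg_deriv hg h1.1 hz).deriv, mul_one]
  · rintro ⟨-, hfin⟩ f hf
    obtain ⟨C, hC0, hC⟩ := besov_bounded hf
    refine ⟨tg_hol hg hf.1, ?_⟩
    refine lt_of_le_of_lt ?_
      (ENNReal.mul_lt_top (ENNReal.ofReal_lt_top (r := C ^ 2)) hfin)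
    refine iSup₂_le fun a ha => ?_
    refine le_trans ?_ (mul_le_mul_right (le_iSup₂_of_le a ha le_rfl) _)
    rw [← lintegral_const_mul' _ _ ENNReal.ofReal_ne_top]
    refine setLIntegral_mono' measurableSet_ball fun z hz => ?_
    rw [(tg_deriv hg hf.1 hz).deriv, ← ENNReal.ofReal_mul (by positivity), norm_mul, mul_pow]
    by_cases hneg : 0 ≤ (1 - norm (phi a z) ^ 2) ^ s
    · apply ENNReal.ofReal_le_ofReal
      have : ‖f z‖ ^ 2 ≤ C ^ 2 := by
        have := hC z hz
        gcongr
      calc ‖deriv g z‖ ^ 2 * ‖f z‖ ^ 2 * (1 - norm (phi a z) ^ 2) ^ s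
          ≤ ‖deriv g z‖ ^ 2 * C ^ 2 * (1 - norm (phi a z) ^ 2) ^ s := by gcongr
        _ = _ := by ring
    · rw [ENNReal.ofReal_of_nonpos]
      · exact zero_le
      · exact mul_nonpos_of_nonneg_of_nonpos (by positivity) (not_le.mp hneg).le
end

section
/- Suppose 0 < s₁ ≤ s₂ ≤ 1 and let g be holomorphic on the unit disc D. Then: (i) the Volterra operator T_g maps Q_{s₁} into Q_{s₂} if and only if g ∈ Q_{s₂,log,1}; (ii) the operator I_g maps Q_{s₁} into Q_{s₂} if and only if g ∈ H^∞; (iii) the multiplication operator M_g maps Q_{s₁} into Q_{s₂} if and only if g ∈ Q_{s₂,log,1} ∩ H^∞. -/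
open MeasureTheory Metric Complex Real Filter Set

set_option linter.unusedVariables false

/-! ### Basic facts on the Moebius maps -/

lemma mem_D {z : ℂ} : z ∈ Metric.ball (0:ℂ) 1 ↔ ‖z‖ < 1 := by simp

lemma norm_den_ge_left {a z : ℂ} (ha : ‖a‖ < 1) (hz : ‖z‖ < 1) :
    1 - ‖a‖ ≤ ‖1 - (starRingEnd ℂ) a * z‖ := by
  have h := norm_sub_norm_le (1:ℂ) ((starRingEnd ℂ) a * z)
  rw [norm_mul, RCLike.norm_conj, norm_one] at h
  nlinarith [norm_nonneg a, norm_nonneg z]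

lemma norm_den_ge_right {a z : ℂ} (ha : ‖a‖ < 1) (hz : ‖z‖ < 1) :
    1 - ‖z‖ ≤ ‖1 - (starRingEnd ℂ) a * z‖ := by
  have h := norm_sub_norm_le (1:ℂ) ((starRingEnd ℂ) a * z)
  rw [norm_mul, RCLike.norm_conj, norm_one] at h
  nlinarith [norm_nonneg a, norm_nonneg z]

lemma norm_den_pos {a z : ℂ} (ha : ‖a‖ < 1) (hz : ‖z‖ < 1) :
    0 < ‖1 - (starRingEnd ℂ) a * z‖ :=
  lt_of_lt_of_le (by linarith) (norm_den_ge_left ha hz)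

lemma den_ne {a z : ℂ} (ha : ‖a‖ < 1) (hz : ‖z‖ < 1) :
    1 - (starRingEnd ℂ) a * z ≠ 0 := norm_pos_iff.1 (norm_den_pos ha hz)

lemma one_sub_phi {a z : ℂ} (ha : ‖a‖ < 1) (hz : ‖z‖ < 1) :
    1 - ‖phi a z‖ ^ 2 =
      (1 - ‖a‖ ^ 2) * (1 - ‖z‖ ^ 2) / ‖1 - (starRingEnd ℂ) a * z‖ ^ 2 := by
  have hd := norm_den_pos ha hz
  rw [phi, norm_div, div_pow, eq_div_iff (by positivity), sub_mul, div_mul_cancel₀ _ (by positivity)]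
  simp only [← Complex.normSq_eq_norm_sq, Complex.normSq_apply]
  simp
  ring

lemma one_sub_phi_pos {a z : ℂ} (ha : ‖a‖ < 1) (hz : ‖z‖ < 1) : 0 < 1 - ‖phi a z‖ ^ 2 := by
  rw [one_sub_phi ha hz]
  have hd := norm_den_pos ha hz
  have h1 : 0 < 1 - ‖a‖ ^ 2 := by nlinarith [norm_nonneg a]
  have h2 : 0 < 1 - ‖z‖ ^ 2 := by nlinarith [norm_nonneg z]
  positivity

lemma one_sub_phi_le (a z : ℂ) : 1 - ‖phi a z‖ ^ 2 ≤ 1 := by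
  nlinarith [sq_nonneg ‖phi a z‖]

lemma phi_lt_one {a z : ℂ} (ha : ‖a‖ < 1) (hz : ‖z‖ < 1) : ‖phi a z‖ < 1 := by
  have := one_sub_phi_pos ha hz
  nlinarith [norm_nonneg (phi a z)]

lemma phi_zero_right (a : ℂ) : phi a 0 = a := by simp [phi]

lemma phi_zero_left (z : ℂ) : phi 0 z = -z := by simp [phi]

lemma phi_self (a : ℂ) : phi a a = 0 := by simp [phi]

lemma one_sub_sq_ne {a : ℂ} (ha : ‖a‖ < 1) : 1 - (starRingEnd ℂ) a * a ≠ 0 := den_ne ha ha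

lemma one_sub_conj_phi {a c w : ℂ} (ha : ‖a‖ < 1) (hc : ‖c‖ < 1) (hw : ‖w‖ < 1) :
    1 - (starRingEnd ℂ) (phi a c) * phi a w =
      (1 - (starRingEnd ℂ) a * a) * (1 - (starRingEnd ℂ) c * w) /
        ((1 - a * (starRingEnd ℂ) c) * (1 - (starRingEnd ℂ) a * w)) := by
  have h1 := den_ne ha hw
  have h2 : 1 - a * (starRingEnd ℂ) c ≠ 0 := by
    have := den_ne hc ha
    rwa [mul_comm] at this
  simp only [phi, map_div₀, map_sub, map_one, map_mul, Complex.conj_conj]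
  generalize (starRingEnd ℂ) a = a' at *
  generalize (starRingEnd ℂ) c = c' at *
  rw [div_mul_div_comm, eq_div_iff (mul_ne_zero h2 h1), sub_mul,
    div_mul_cancel₀ _ (mul_ne_zero h2 h1)]
  ring

lemma phi_phi {a z : ℂ} (ha : ‖a‖ < 1) (hz : ‖z‖ < 1) : phi a (phi a z) = z := by
  have h1 := den_ne ha hz
  have h3 := den_ne ha ha
  have h4 : 1 - (starRingEnd ℂ) a * phi a z ≠ 0 := den_ne ha (phi_lt_one ha hz)
  rw [phi, div_eq_iff h4]
  have e : phi a z * (1 - (starRingEnd ℂ) a * z) = a - z := by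
    rw [phi, div_mul_cancel₀ _ h1]
  apply mul_right_cancel₀ h1
  linear_combination (z * (starRingEnd ℂ) a - 1) * e

lemma phi_inv {a c w : ℂ} (ha : ‖a‖ < 1) (hc : ‖c‖ < 1) (hw : ‖w‖ < 1) :
    1 - ‖phi (phi a c) (phi a w)‖ ^ 2 = 1 - ‖phi c w‖ ^ 2 := by
  rw [one_sub_phi (phi_lt_one ha hc) (phi_lt_one ha hw), one_sub_phi ha hc, one_sub_phi ha hw,
    one_sub_phi hc hw, one_sub_conj_phi ha hc hw]
  have h1 := norm_den_pos ha hw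
  have h2 := norm_den_pos ha hc
  have h3 := norm_den_pos hc hw
  have h4 : ‖1 - a * (starRingEnd ℂ) c‖ = ‖1 - (starRingEnd ℂ) a * c‖ := by
    rw [← RCLike.norm_conj]; simp
  have h5 : ‖1 - (starRingEnd ℂ) a * a‖ = 1 - ‖a‖ ^ 2 := by
    rw [← Complex.normSq_eq_conj_mul_self, Complex.normSq_eq_norm_sq]
    have : (1 : ℂ) - ((‖a‖ ^ 2 : ℝ) : ℂ) = ((1 - ‖a‖ ^ 2 : ℝ) : ℂ) := by push_cast; ring
    rw [this, Complex.norm_real, Real.norm_of_nonneg]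
    nlinarith [norm_nonneg a]
  rw [norm_div, norm_mul, norm_mul, h4, h5]
  have h6 : 0 < 1 - ‖a‖ ^ 2 := by nlinarith [norm_nonneg a]
  field_simp

lemma hasDerivAt_phi {a z : ℂ} (ha : ‖a‖ < 1) (hz : ‖z‖ < 1) :
    HasDerivAt (phi a) (-(1 - (starRingEnd ℂ) a * a) / (1 - (starRingEnd ℂ) a * z) ^ 2) z := by
  have h1 := den_ne ha hz
  have hn : HasDerivAt (fun z : ℂ => a - z) (-1) z := by
    simpa using (hasDerivAt_id z).const_sub a
  have hd : HasDerivAt (fun z : ℂ => 1 - (starRingEnd ℂ) a * z) (-(starRingEnd ℂ) a) z := by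
    simpa using ((hasDerivAt_id z).const_mul ((starRingEnd ℂ) a)).const_sub 1
  have := hn.div hd h1
  refine this.congr_deriv ?_
  congr 1
  ring

lemma image_phi {a : ℂ} (ha : ‖a‖ < 1) :
    phi a '' Metric.ball (0:ℂ) 1 = Metric.ball (0:ℂ) 1 := by
  ext z
  constructor
  · rintro ⟨w, hw, rfl⟩
    exact mem_D.2 (phi_lt_one ha (mem_D.1 hw))
  · intro hz
    exact ⟨phi a z, mem_D.2 (phi_lt_one ha (mem_D.1 hz)), phi_phi ha (mem_D.1 hz)⟩

lemma det_mul_complex (c : ℂ) :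
    |((ContinuousLinearMap.toSpanSingleton ℂ c).restrictScalars ℝ : ℂ →L[ℝ] ℂ).det| = ‖c‖ ^ 2 := by
  have : (((ContinuousLinearMap.toSpanSingleton ℂ c).restrictScalars ℝ : ℂ →L[ℝ] ℂ)).det
      = ‖c‖ ^ 2 := by
    rw [ContinuousLinearMap.det, ← LinearMap.det_toMatrix Complex.basisOneI, Matrix.det_fin_two]
    simp [LinearMap.toMatrix_apply, ← Complex.normSq_eq_norm_sq, Complex.normSq_apply]
  rw [this, abs_of_nonneg (by positivity)]

/-- Change of variables by `phi a` on the disc. -/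
lemma lintegral_phi {a : ℂ} (ha : ‖a‖ < 1) (u : ℂ → ENNReal) :
    ∫⁻ w in Metric.ball (0:ℂ) 1, ENNReal.ofReal (‖deriv (phi a) w‖ ^ 2) * u (phi a w) ∂dA =
      ∫⁻ z in Metric.ball (0:ℂ) 1, u z ∂dA := by
  have hinj : InjOn (phi a) (Metric.ball (0:ℂ) 1) := by
    intro x hx y hy hxy
    rw [← phi_phi ha (mem_D.1 hx), hxy, phi_phi ha (mem_D.1 hy)]
  have key := lintegral_image_eq_lintegral_abs_det_fderiv_mul (volume : Measure ℂ)
    (measurableSet_ball (x := (0:ℂ)) (ε := 1)) (f := phi a)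
    (f' := fun w => (ContinuousLinearMap.toSpanSingleton ℂ (deriv (phi a) w)).restrictScalars ℝ)
    (fun x hx => by
      have h := (hasDerivAt_phi ha (mem_D.1 hx)).differentiableAt.hasDerivAt
      exact (h.hasFDerivAt.restrictScalars ℝ).hasFDerivWithinAt) hinj u
  rw [image_phi ha] at key
  simp only [det_mul_complex] at key
  simp only [dA, Measure.restrict_smul, lintegral_smul_measure]
  rw [key]

/-- The weighted square integral. -/
noncomputable def NN (u : ℂ → ℂ) (s : ℝ) (a : ℂ) : ENNReal :=
  ∫⁻ z in Metric.ball (0:ℂ) 1, ENNReal.ofReal (‖u z‖ ^ 2 * (1 - ‖phi a z‖ ^ 2) ^ s) ∂dA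

lemma NN_phi {a c : ℂ} (ha : ‖a‖ < 1) (hc : ‖c‖ < 1) (u : ℂ → ℂ) (s : ℝ) :
    NN (fun w => u (phi a w) * deriv (phi a) w) s c = NN u s (phi a c) := by
  rw [NN, NN, ← lintegral_phi ha (fun z => ENNReal.ofReal (‖u z‖ ^ 2 * _))]
  refine setLIntegral_congr_fun measurableSet_ball ?_
  intro w hw
  simp only
  rw [phi_inv ha hc (mem_D.1 hw), ← ENNReal.ofReal_mul (by positivity), norm_mul]
  congr 1
  ring

lemma NN_congr {u v : ℂ → ℂ} {s : ℝ} {a : ℂ} (h : ∀ z ∈ Metric.ball (0:ℂ) 1, u z = v z) :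
    NN u s a = NN v s a := by
  refine setLIntegral_congr_fun measurableSet_ball ?_
  intro w hw
  simp only [h w hw]

lemma mem_Qs {f : ℂ → ℂ} {s : ℝ} : f ∈ Qs s ↔ HolOn f ∧
    ∃ C : ENNReal, C < ⊤ ∧ ∀ a : ℂ, ‖a‖ < 1 → NN (deriv f) s a ≤ C := by
  constructor
  · rintro ⟨h1, h2⟩
    refine ⟨h1, _, h2, fun a ha => ?_⟩
    exact le_iSup₂ (f := fun a (_ : a ∈ Metric.ball (0:ℂ) 1) => NN (deriv f) s a) a (mem_D.2 ha)
  · rintro ⟨h1, C, hC, h2⟩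
    exact ⟨h1, lt_of_le_of_lt (iSup₂_le fun a ha => h2 a (mem_D.1 ha)) hC⟩

lemma mem_QsLog {f : ℂ → ℂ} {s : ℝ} : f ∈ QsLog s 1 ↔ HolOn f ∧
    ∃ C : ENNReal, C < ⊤ ∧ ∀ a : ℂ, ‖a‖ < 1 →
      ENNReal.ofReal (Real.log (2 / (1 - ‖a‖)) ^ 2) * NN (deriv f) s a ≤ C := by
  have e : ∀ x : ℝ, x ^ (2 * (1:ℝ)) = x ^ 2 := fun x => by
    rw [mul_one]; exact Real.rpow_two x
  constructor
  · rintro ⟨h1, h2⟩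
    simp only [e] at h2
    refine ⟨h1, _, h2, fun a ha => ?_⟩
    exact le_iSup₂ (f := fun a (_ : a ∈ Metric.ball (0:ℂ) 1) =>
      ENNReal.ofReal (Real.log (2 / (1 - ‖a‖)) ^ 2) * NN (deriv f) s a) a (mem_D.2 ha)
  · rintro ⟨h1, C, hC, h2⟩
    refine ⟨h1, ?_⟩
    simp only [e]
    exact lt_of_le_of_lt (iSup₂_le fun a ha => h2 a (mem_D.1 ha)) hC

lemma NN_add_le {u v w : ℂ → ℂ} {s : ℝ} {a : ℂ} (ha : ‖a‖ < 1)
    (hu : AEMeasurable u (dA.restrict (Metric.ball (0:ℂ) 1)))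
    (h : ∀ z ∈ Metric.ball (0:ℂ) 1, w z = u z + v z) :
    NN w s a ≤ 2 * (NN u s a + NN v s a) := by
  have hm : AEMeasurable (fun z => ENNReal.ofReal (‖u z‖ ^ 2 * (1 - ‖phi a z‖ ^ 2) ^ s))
      (dA.restrict (Metric.ball (0:ℂ) 1)) := by
    have : Measurable (phi a) := by unfold phi; fun_prop
    fun_prop
  rw [NN, NN, NN, ← lintegral_add_left' hm, ← lintegral_const_mul' _ _ (by simp)]
  refine setLIntegral_mono' measurableSet_ball ?_
  intro z hz
  have hp : 0 ≤ (1 - ‖phi a z‖ ^ 2) ^ s :=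
    Real.rpow_nonneg (one_sub_phi_pos ha (mem_D.1 hz)).le _
  rw [← ENNReal.ofReal_add (by positivity) (by positivity),
    show (2:ENNReal) = ENNReal.ofReal 2 by simp, ← ENNReal.ofReal_mul (by norm_num)]
  apply ENNReal.ofReal_le_ofReal
  have h1 : ‖w z‖ ≤ ‖u z‖ + ‖v z‖ := by rw [h z hz]; exact norm_add_le _ _
  have h2 : ‖w z‖ ^ 2 ≤ 2 * (‖u z‖ ^ 2 + ‖v z‖ ^ 2) := by
    nlinarith [norm_nonneg (w z), sq_nonneg (‖u z‖ - ‖v z‖), norm_nonneg (u z), norm_nonneg (v z)]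
  nlinarith

lemma NN_mono {u v : ℂ → ℂ} {s : ℝ} {a : ℂ} (ha : ‖a‖ < 1) {C : ℝ} (hC : 0 ≤ C)
    (h : ∀ z ∈ Metric.ball (0:ℂ) 1, ‖u z‖ ≤ C * ‖v z‖) :
    NN u s a ≤ ENNReal.ofReal (C ^ 2) * NN v s a := by
  rw [NN, NN, ← lintegral_const_mul' _ _ (by simp)]
  refine setLIntegral_mono' measurableSet_ball ?_
  intro z hz
  have hp : 0 ≤ (1 - ‖phi a z‖ ^ 2) ^ s :=
    Real.rpow_nonneg (one_sub_phi_pos ha (mem_D.1 hz)).le _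
  rw [← ENNReal.ofReal_mul (by positivity)]
  apply ENNReal.ofReal_le_ofReal
  have h1 := h z hz
  have h2 : ‖u z‖ ^ 2 ≤ C ^ 2 * ‖v z‖ ^ 2 := by
    rw [← mul_pow]; gcongr
  nlinarith

lemma NN_exp_mono {u : ℂ → ℂ} {s t : ℝ} {a : ℂ} (ha : ‖a‖ < 1) (hst : s ≤ t) :
    NN u t a ≤ NN u s a := by
  refine setLIntegral_mono' measurableSet_ball ?_
  intro z hz
  apply ENNReal.ofReal_le_ofReal
  have := Real.rpow_le_rpow_of_exponent_ge (one_sub_phi_pos ha (mem_D.1 hz))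
    (one_sub_phi_le a z) hst
  gcongr

lemma aemeas_of_contOn {u : ℂ → ℂ} (hu : ContinuousOn u (Metric.ball (0:ℂ) 1)) :
    AEMeasurable u (dA.restrict (Metric.ball (0:ℂ) 1)) :=
  hu.aemeasurable measurableSet_ball

lemma HolOn.cont {f : ℂ → ℂ} (hf : HolOn f) : ContinuousOn f (Metric.ball (0:ℂ) 1) :=
  DifferentiableOn.continuousOn hf

lemma HolOn.deriv' {f : ℂ → ℂ} (hf : HolOn f) : HolOn (deriv f) :=
  DifferentiableOn.deriv hf isOpen_ball

lemma HolOn.diffAt {f : ℂ → ℂ} (hf : HolOn f) {z : ℂ} (hz : ‖z‖ < 1) : DifferentiableAt ℂ f z :=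
  DifferentiableOn.differentiableAt hf (isOpen_ball.mem_nhds (mem_D.2 hz))

lemma circle_mean_sq {h : ℂ → ℂ} {z : ℂ} {ρ : ℝ} (hρ : 0 < ρ)
    (hh : DifferentiableOn ℂ h (Metric.closedBall z ρ)) :
    ENNReal.ofReal (2 * π * ‖h z‖ ^ 2) ≤
      ∫⁻ θ in Ioo (-π) π, ENNReal.ofReal (‖h (circleMap z ρ θ)‖ ^ 2) := by
  have hd : DiffContOnCl ℂ (fun w => h w ^ 2) (Metric.ball z |ρ|) := by
    rw [abs_of_pos hρ]
    apply DifferentiableOn.diffContOnCl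
    rw [closure_ball _ hρ.ne']
    exact hh.pow 2
  have h1 := hd.circleAverage
  rw [Real.circleAverage_def] at h1
  have hper : Function.Periodic (fun θ => h (circleMap z ρ θ) ^ 2) (2 * π) := by
    intro θ; simp only [periodic_circleMap z ρ θ]
  have h2 : ∫ θ in (0:ℝ)..2 * π, h (circleMap z ρ θ) ^ 2 =
      ∫ θ in (-π)..π, h (circleMap z ρ θ) ^ 2 := by
    have := hper.intervalIntegral_add_eq 0 (-π)
    rw [zero_add] at this
    rw [this]
    congr 1
    ring
  rw [h2, intervalIntegral.integral_of_le (by linarith [Real.pi_pos]),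
    integral_Ioc_eq_integral_Ioo] at h1
  have h3 : ‖∫ θ in Ioo (-π) π, h (circleMap z ρ θ) ^ 2‖ = 2 * π * ‖h z‖ ^ 2 := by
    have hpi := Real.pi_pos
    have : ∫ θ in Ioo (-π) π, h (circleMap z ρ θ) ^ 2 = (2 * π : ℝ) • h z ^ 2 := by
      rw [← h1, smul_inv_smul₀ (by positivity)]
    rw [this, norm_smul, norm_pow, Real.norm_of_nonneg (by positivity)]
  rw [← h3, ofReal_norm]
  refine (enorm_integral_le_lintegral_enorm _).trans (le_of_eq ?_)
  refine lintegral_congr fun θ => ?_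
  rw [← ofReal_norm, norm_pow]

lemma mean_value_sq {h : ℂ → ℂ} (hh : HolOn h) {z : ℂ} {r : ℝ} (hr : 0 < r) (hzr : ‖z‖ + r ≤ 1) :
    ENNReal.ofReal (r ^ 2 * ‖h z‖ ^ 2) ≤
      ∫⁻ w in Metric.ball z r, ENNReal.ofReal (‖h w‖ ^ 2) ∂dA := by
  have hpi := Real.pi_pos
  have hsub : Metric.ball z r ⊆ Metric.ball (0:ℂ) 1 := by
    apply ball_subset_ball'; rw [dist_zero_right]; linarith
  set F : ℂ → ENNReal := (Metric.ball z r).indicator (fun w => ENNReal.ofReal (‖h w‖ ^ 2)) with hF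
  have e1 : ∫⁻ w in Metric.ball z r, ENNReal.ofReal (‖h w‖ ^ 2) = ∫⁻ w, F (z + w) := by
    rw [lintegral_add_left_eq_self F z, hF, lintegral_indicator measurableSet_ball]
  have e2 : ∫⁻ p in (Ioo 0 r ×ˢ Ioo (-π) π : Set (ℝ × ℝ)),
      ENNReal.ofReal p.1 * ENNReal.ofReal (‖h (circleMap z p.1 p.2)‖ ^ 2) ≤ ∫⁻ w, F (z + w) := by
    rw [← Complex.lintegral_comp_polarCoord_symm]
    calc _ = ∫⁻ p in (Ioo 0 r ×ˢ Ioo (-π) π : Set (ℝ × ℝ)),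
          ENNReal.ofReal p.1 • F (z + Complex.polarCoord.symm p) := by
          refine setLIntegral_congr_fun (measurableSet_Ioo.prod measurableSet_Ioo) ?_
          rintro ⟨ρ, θ⟩ ⟨hρ, hθ⟩
          simp only [mem_Ioo] at hρ hθ
          have e : z + Complex.polarCoord.symm (ρ, θ) = circleMap z ρ θ := by
            rw [Complex.polarCoord_symm_apply, circleMap, Complex.exp_mul_I]
            simp
          simp only [smul_eq_mul]
          rw [e, hF, indicator_of_mem]
          simp only [Metric.mem_ball, dist_eq_norm, circleMap_sub_center, norm_circleMap_zero]
          rw [abs_of_pos hρ.1]; exact hρ.2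
      _ ≤ _ := by
          apply lintegral_mono_set
          rintro ⟨ρ, θ⟩ ⟨hρ, hθ⟩
          exact ⟨hρ.1, hθ⟩
  have hcont : ContinuousOn (fun p : ℝ × ℝ => h (circleMap z p.1 p.2)) (Ioo 0 r ×ˢ Ioo (-π) π) := by
    refine hh.cont.comp (by unfold circleMap; fun_prop) ?_
    rintro ⟨ρ, θ⟩ ⟨hρ, hθ⟩
    apply hsub
    simp only [mem_Ioo] at hρ
    simp only [Metric.mem_ball, dist_eq_norm, circleMap_sub_center, norm_circleMap_zero]
    rw [abs_of_pos hρ.1]; exact hρ.2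
  have hms : MeasurableSet (Ioo 0 r ×ˢ Ioo (-π) π : Set (ℝ × ℝ)) :=
    measurableSet_Ioo.prod measurableSet_Ioo
  have hmeas : AEMeasurable (fun p : ℝ × ℝ => ENNReal.ofReal p.1 *
      ENNReal.ofReal (‖h (circleMap z p.1 p.2)‖ ^ 2))
      ((volume.restrict (Ioo 0 r)).prod (volume.restrict (Ioo (-π) π))) := by
    rw [Measure.prod_restrict]
    have := hcont.aemeasurable (μ := volume) hms
    exact (by fun_prop : AEMeasurable (fun p : ℝ × ℝ => ENNReal.ofReal p.1) _).mul
      ((this.norm.pow_const 2).ennreal_ofReal)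
  have e3 : ENNReal.ofReal (π * r ^ 2 * ‖h z‖ ^ 2) ≤
      ∫⁻ p in (Ioo 0 r ×ˢ Ioo (-π) π : Set (ℝ × ℝ)),
      ENNReal.ofReal p.1 * ENNReal.ofReal (‖h (circleMap z p.1 p.2)‖ ^ 2) := by
    rw [Measure.volume_eq_prod, ← Measure.prod_restrict, lintegral_prod _ hmeas]
    calc ENNReal.ofReal (π * r ^ 2 * ‖h z‖ ^ 2)
        = ∫⁻ ρ in Ioo 0 r, ENNReal.ofReal (ρ * (2 * π * ‖h z‖ ^ 2)) := by
          rw [← ofReal_integral_eq_lintegral_ofReal]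
          · congr 1
            rw [← integral_Ioc_eq_integral_Ioo, ← intervalIntegral.integral_of_le hr.le,
              intervalIntegral.integral_mul_const, integral_id]
            ring
          · exact ((by fun_prop : Continuous fun ρ : ℝ =>
              ρ * (2 * π * ‖h z‖ ^ 2)).integrableOn_Icc (a := 0) (b := r)).mono_set Ioo_subset_Icc_self
          · refine (ae_restrict_iff' measurableSet_Ioo).2 (Eventually.of_forall fun ρ hρ => ?_)
            have := hρ.1
            simp only [Pi.zero_apply]
            positivity
      _ ≤ _ := by
          refine setLIntegral_mono' measurableSet_Ioo fun ρ hρ => ?_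
          simp only
          rw [lintegral_const_mul' _ _ (by simp), ENNReal.ofReal_mul hρ.1.le]
          gcongr
          apply circle_mean_sq hρ.1
          exact DifferentiableOn.mono hh ((closedBall_subset_ball hρ.2).trans hsub)
  rw [dA, Measure.restrict_smul, lintegral_smul_measure, e1, smul_eq_mul,
    ← ENNReal.div_eq_inv_mul, ENNReal.le_div_iff_mul_le (by simp [hpi]) (by simp),
    ← ENNReal.ofReal_mul (by positivity)]
  refine le_trans (le_of_eq ?_) (e3.trans e2)
  congr 1; ring

lemma phi_near {z w : ℂ} (hz : ‖z‖ < 1) (hw : ‖w - z‖ ≤ (1 - ‖z‖) / 2) :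
    ‖w‖ < 1 ∧ 1 / 16 ≤ 1 - ‖phi z w‖ ^ 2 := by
  have hw1 : ‖w‖ ≤ ‖z‖ + (1 - ‖z‖) / 2 := by
    have : ‖w‖ ≤ ‖w - z‖ + ‖z‖ := by simpa using norm_add_le (w - z) z
    linarith
  have hw2 : ‖w‖ < 1 := by linarith
  refine ⟨hw2, ?_⟩
  rw [one_sub_phi hz hw2]
  have hd := norm_den_pos hz hw2
  have hup : ‖1 - (starRingEnd ℂ) z * w‖ ≤ 5 / 2 * (1 - ‖z‖) := by
    have e : 1 - (starRingEnd ℂ) z * w =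
        ((1 - ‖z‖ ^ 2 : ℝ) : ℂ) - (starRingEnd ℂ) z * (w - z) := by
      push_cast
      rw [← Complex.conj_mul']; ring
    rw [e]
    refine (norm_sub_le _ _).trans ?_
    rw [norm_mul, RCLike.norm_conj, Complex.norm_real, Real.norm_of_nonneg
      (by nlinarith [norm_nonneg z])]
    have := mul_le_mul_of_nonneg_left hw (norm_nonneg z)
    nlinarith [norm_nonneg z]
  rw [le_div_iff₀ (by positivity)]
  have h1 : ‖1 - (starRingEnd ℂ) z * w‖ ^ 2 ≤ (5 / 2 * (1 - ‖z‖)) ^ 2 := by gcongr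
  have h2 : (1 - ‖z‖) * ((1 - ‖z‖) / 2) ≤ (1 - ‖z‖ ^ 2) * (1 - ‖w‖ ^ 2) := by
    apply mul_le_mul
    · nlinarith [norm_nonneg z]
    · nlinarith [norm_nonneg w]
    · linarith
    · nlinarith [norm_nonneg z]
  nlinarith [sq_nonneg (1 - ‖z‖)]

/-- Pointwise bound by the weighted integral centred at the point. -/
lemma pointwise_le_NN {u : ℂ → ℂ} (hu : HolOn u) {s : ℝ} (hs : 0 < s) {z : ℂ} (hz : ‖z‖ < 1) :
    ENNReal.ofReal ((1 - ‖z‖) ^ 2 * ‖u z‖ ^ 2) ≤ ENNReal.ofReal (4 * 16 ^ s) * NN u s z := by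
  have hm := mean_value_sq hu (z := z) (r := (1 - ‖z‖) / 2) (by linarith) (by linarith)
  have h1 : ∫⁻ w in Metric.ball z ((1 - ‖z‖) / 2), ENNReal.ofReal (‖u w‖ ^ 2) ∂dA ≤
      ENNReal.ofReal (16 ^ s) * NN u s z := by
    rw [NN, ← lintegral_const_mul' _ _ (by simp)]
    refine le_trans ?_ (lintegral_mono_set (s := Metric.ball z ((1 - ‖z‖) / 2)) ?_)
    · refine setLIntegral_mono' measurableSet_ball fun w hw => ?_
      rw [Metric.mem_ball, dist_eq_norm] at hw
      obtain ⟨h1, h2⟩ := phi_near hz hw.le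
      rw [← ENNReal.ofReal_mul (by positivity)]
      apply ENNReal.ofReal_le_ofReal
      have h3 : (1 / 16 : ℝ) ^ s ≤ (1 - ‖phi z w‖ ^ 2) ^ s :=
        Real.rpow_le_rpow (by norm_num) h2 hs.le
      have h4 : (16 : ℝ) ^ s * (1 / 16 : ℝ) ^ s = 1 := by
        rw [← Real.mul_rpow (by norm_num) (by norm_num)]; norm_num
      have h5 : (1:ℝ) ≤ 16 ^ s * (1 - ‖phi z w‖ ^ 2) ^ s := by
        
        calc (1:ℝ) = 16 ^ s * (1 / 16 : ℝ) ^ s := h4.symm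
          _ ≤ _ := mul_le_mul_of_nonneg_left h3 (by positivity)
      nlinarith [sq_nonneg ‖u w‖]
    · intro w hw
      rw [Metric.mem_ball, dist_eq_norm] at hw
      exact mem_D.2 (phi_near hz hw.le).1
  calc ENNReal.ofReal ((1 - ‖z‖) ^ 2 * ‖u z‖ ^ 2)
      = ENNReal.ofReal 4 * ENNReal.ofReal (((1 - ‖z‖) / 2) ^ 2 * ‖u z‖ ^ 2) := by
        rw [← ENNReal.ofReal_mul (by norm_num)]; congr 1; ring
    _ ≤ ENNReal.ofReal 4 * (ENNReal.ofReal (16 ^ s) * NN u s z) := by gcongr; exact hm.trans h1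
    _ = _ := by rw [← mul_assoc, ← ENNReal.ofReal_mul (by norm_num)]

lemma growth {f : ℂ → ℂ} (hf : HolOn f) {B : ℝ} (hB : ∀ z : ℂ, ‖z‖ < 1 → (1 - ‖z‖) * ‖deriv f z‖ ≤ B)
    {a : ℂ} (ha : ‖a‖ < 1) : ‖f a - f 0‖ ≤ B * Real.log (1 / (1 - ‖a‖)) := by
  have hta : ∀ t ∈ Icc (0:ℝ) 1, t * ‖a‖ < 1 := fun t ht => by
    nlinarith [norm_nonneg a, ht.1, ht.2]
  have hta' : ∀ t ∈ Icc (0:ℝ) 1, ‖(t:ℂ) * a‖ = t * ‖a‖ := fun t ht => by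
    rw [norm_mul, Complex.norm_real, Real.norm_of_nonneg ht.1]
  have hd : ∀ t ∈ Icc (0:ℝ) 1, HasDerivAt (fun t : ℝ => f ((t:ℂ) * a) - f 0)
      (deriv f ((t:ℂ) * a) * a) t := fun t ht => by
    have h1 : HasDerivAt f (deriv f ((t:ℂ) * a)) ((t:ℂ) * a) :=
      (hf.diffAt (by rw [hta' t ht]; exact hta t ht)).hasDerivAt
    have h2 : HasDerivAt (fun t : ℝ => (t:ℂ) * a) a t := by
      simpa using (Complex.ofRealCLM.hasDerivAt (x := t)).mul_const a
    exact (h1.comp_of_eq t h2 rfl).sub_const _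
  have hBd : ∀ t ∈ Icc (0:ℝ) 1, HasDerivAt (fun t => B * (-Real.log (1 - t * ‖a‖)))
      (B * (‖a‖ / (1 - t * ‖a‖))) t := fun t ht => by
    have h0 := hta t ht
    have h1 : HasDerivAt (fun t : ℝ => 1 - t * ‖a‖) (-‖a‖) t := by
      simpa using ((hasDerivAt_id t).mul_const ‖a‖).const_sub 1
    have h2 := ((h1.log (by linarith)).neg).const_mul B
    refine h2.congr_deriv ?_
    ring
  have key := image_norm_le_of_norm_deriv_right_le_deriv_boundary'
    (f := fun t : ℝ => f ((t:ℂ) * a) - f 0) (f' := fun t : ℝ => deriv f ((t:ℂ) * a) * a)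
    (a := 0) (b := 1)
    (B := fun t => B * (-Real.log (1 - t * ‖a‖))) (B' := fun t => B * (‖a‖ / (1 - t * ‖a‖)))
    (fun t ht => (hd t ht).continuousAt.continuousWithinAt)
    (fun t ht => (hd t (Ico_subset_Icc_self ht)).hasDerivWithinAt)
    (by simp)
    (fun t ht => (hBd t ht).continuousAt.continuousWithinAt)
    (fun t ht => (hBd t (Ico_subset_Icc_self ht)).hasDerivWithinAt)
    (fun t ht => by
      have ht' := Ico_subset_Icc_self ht
      have h0 := hta t ht'
      have h1 := hB ((t:ℂ) * a) (by rw [hta' t ht']; exact h0)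
      rw [hta' t ht'] at h1
      rw [norm_mul, ← mul_div_assoc, le_div_iff₀ (by linarith)]
      nlinarith [norm_nonneg a])
    (right_mem_Icc.2 zero_le_one)
  simpa using key

lemma seg_int {h : ℂ → ℂ} (hh : HolOn h) :
    HolOn (fun z => z * ∫ t in (0:ℝ)..1, h ((t:ℂ) * z)) ∧
    ∀ z : ℂ, ‖z‖ < 1 → deriv (fun z => z * ∫ t in (0:ℝ)..1, h ((t:ℂ) * z)) z = h z := by
  obtain ⟨P, hP⟩ := DifferentiableOn.isExactOn_ball hh
  have e : ∀ z ∈ Metric.ball (0:ℂ) 1, z * ∫ t in (0:ℝ)..1, h ((t:ℂ) * z) = P z - P 0 := by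
    intro z hz
    rw [mem_D] at hz
    have hb : ∀ t ∈ Icc (0:ℝ) 1, (t:ℂ) * z ∈ Metric.ball (0:ℂ) 1 := fun t ht => by
      rw [mem_D, norm_mul, Complex.norm_real, Real.norm_of_nonneg ht.1]
      nlinarith [norm_nonneg z, ht.1, ht.2]
    have := intervalIntegral.integral_eq_sub_of_hasDerivAt (a := 0) (b := 1)
      (f := fun t : ℝ => P ((t:ℂ) * z)) (f' := fun t : ℝ => h ((t:ℂ) * z) * z)
      (fun t ht => by
        rw [uIcc_of_le zero_le_one] at ht
        have h2 : HasDerivAt (fun t : ℝ => (t:ℂ) * z) z t := by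
          simpa using (Complex.ofRealCLM.hasDerivAt (x := t)).mul_const z
        exact (hP _ (hb t ht)).comp_of_eq t h2 rfl)
      (by
        apply ContinuousOn.intervalIntegrable
        rw [uIcc_of_le zero_le_one]
        exact (hh.cont.comp (by fun_prop) hb).mul continuousOn_const)
    rw [intervalIntegral.integral_mul_const] at this
    rw [mul_comm, this]; simp
  have hd : ∀ z ∈ Metric.ball (0:ℂ) 1,
      HasDerivAt (fun z => z * ∫ t in (0:ℝ)..1, h ((t:ℂ) * z)) (h z) z := by
    intro z hz
    refine ((hP z hz).sub_const (P 0)).congr_of_eventuallyEq ?_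
    filter_upwards [isOpen_ball.mem_nhds hz] with w hw using e w hw
  exact ⟨fun z hz => (hd z hz).differentiableAt.differentiableWithinAt,
    fun z hz => (hd z (mem_D.2 hz)).deriv⟩

lemma Tg_hol {g f : ℂ → ℂ} (hg : HolOn g) (hf : HolOn f) : HolOn (Tg g f) ∧
    ∀ z : ℂ, ‖z‖ < 1 → deriv (Tg g f) z = deriv g z * f z :=
  seg_int (h := fun z => deriv g z * f z) (DifferentiableOn.mul hg.deriv' hf)

lemma Ig_hol {g f : ℂ → ℂ} (hg : HolOn g) (hf : HolOn f) : HolOn (Ig g f) ∧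
    ∀ z : ℂ, ‖z‖ < 1 → deriv (Ig g f) z = g z * deriv f z :=
  seg_int (h := fun z => g z * deriv f z) (DifferentiableOn.mul hg hf.deriv')

lemma Mg_hol {g f : ℂ → ℂ} (hg : HolOn g) (hf : HolOn f) : HolOn (Mg g f) ∧
    ∀ z : ℂ, ‖z‖ < 1 → deriv (Mg g f) z = deriv g z * f z + g z * deriv f z :=
  ⟨DifferentiableOn.mul hg hf, fun z hz => deriv_fun_mul (hg.diffAt hz) (hf.diffAt hz)⟩

instance : SFinite dA := by unfold dA; infer_instance

/-- logarithmic weight variable -/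
noncomputable def UU (a : ℂ) (x : ℝ) : ℝ := Real.log ((1 - x) / (1 - ‖a‖))

lemma path_sq {F : ℂ → ℂ} (hF : HolOn F) {a ζ : ℂ} (ha : ‖a‖ < 1) (hζ : ‖ζ‖ < 1) :
    ENNReal.ofReal (‖F ζ - F 0‖ ^ 2) ≤ ENNReal.ofReal π *
      ∫⁻ t in Ioo (0:ℝ) 1, ENNReal.ofReal (‖deriv F ((t:ℂ) * ζ)‖ ^ 2 *
        (‖ζ‖ * ((1 - t * ‖ζ‖) * (1 + UU a (t * ‖ζ‖) ^ 2)))) := by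
  have hta : ∀ t ∈ Icc (0:ℝ) 1, t * ‖ζ‖ < 1 := fun t ht => by
    nlinarith [norm_nonneg ζ, ht.1, ht.2]
  have hb : ∀ t ∈ Icc (0:ℝ) 1, (t:ℂ) * ζ ∈ Metric.ball (0:ℂ) 1 := fun t ht => by
    rw [mem_D, norm_mul, Complex.norm_real, Real.norm_of_nonneg ht.1]
    exact hta t ht
  have hcd : ContinuousOn (fun t : ℝ => deriv F ((t:ℂ) * ζ)) (Icc 0 1) :=
    hF.deriv'.cont.comp (by fun_prop) hb
  set W : ℝ → ℝ := fun t => (1 - t * ‖ζ‖) * (1 + UU a (t * ‖ζ‖) ^ 2) with hW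
  have hWpos : ∀ t ∈ Icc (0:ℝ) 1, 0 < W t := fun t ht => by
    have := hta t ht
    have h1 : 0 < 1 - t * ‖ζ‖ := by linarith
    simp only [hW]; positivity
  have hWc : ContinuousOn W (Icc 0 1) := by
    simp only [hW, UU]
    refine ContinuousOn.mul (by fun_prop) (continuousOn_const.add (ContinuousOn.pow ?_ 2))
    refine ContinuousOn.log (by fun_prop) fun t ht => ?_
    have := hta t ht
    have h1 : 0 < 1 - t * ‖ζ‖ := by linarith
    have h2 : 0 < 1 - ‖a‖ := by linarith
    positivity
  -- fundamental theorem of calculus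
  have hftc : ∫ t in (0:ℝ)..1, deriv F ((t:ℂ) * ζ) * ζ = F ζ - F 0 := by
    have := intervalIntegral.integral_eq_sub_of_hasDerivAt (a := 0) (b := 1)
      (f := fun t : ℝ => F ((t:ℂ) * ζ)) (f' := fun t : ℝ => deriv F ((t:ℂ) * ζ) * ζ)
      (fun t ht => by
        rw [uIcc_of_le zero_le_one] at ht
        have h2 : HasDerivAt (fun t : ℝ => (t:ℂ) * ζ) ζ t := by
          simpa using (Complex.ofRealCLM.hasDerivAt (x := t)).mul_const ζ
        exact (hF.diffAt (mem_D.1 (hb t ht))).hasDerivAt.comp_of_eq t h2 rfl)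
      (by
        apply ContinuousOn.intervalIntegrable
        rw [uIcc_of_le zero_le_one]
        exact hcd.mul continuousOn_const)
    rw [this]; simp
  have h1 : ENNReal.ofReal ‖F ζ - F 0‖ ≤
      ∫⁻ t in Ioo (0:ℝ) 1, ENNReal.ofReal (‖deriv F ((t:ℂ) * ζ)‖ * √(‖ζ‖ * W t)) *
        ENNReal.ofReal (√(‖ζ‖ / W t)) := by
    rw [← hftc, intervalIntegral.integral_of_le zero_le_one, integral_Ioc_eq_integral_Ioo, ofReal_norm]
    refine (enorm_integral_le_lintegral_enorm _).trans ?_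
    refine setLIntegral_mono' measurableSet_Ioo fun t ht => ?_
    have hw := hWpos t (Ioo_subset_Icc_self ht)
    rw [← ENNReal.ofReal_mul (by positivity), ← ofReal_norm, norm_mul]
    apply ENNReal.ofReal_le_ofReal
    rw [mul_assoc, ← Real.sqrt_mul (by positivity)]
    have : ‖ζ‖ * W t * (‖ζ‖ / W t) = ‖ζ‖ ^ 2 := by field_simp
    rw [this, Real.sqrt_sq (norm_nonneg _)]
  have hsub : Ioo (0:ℝ) 1 ⊆ Icc 0 1 := Ioo_subset_Icc_self
  have m1 : AEMeasurable (fun t : ℝ => ENNReal.ofReal (‖deriv F ((t:ℂ) * ζ)‖ * √(‖ζ‖ * W t)))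
      (volume.restrict (Ioo (0:ℝ) 1)) := by
    refine AEMeasurable.ennreal_ofReal (ContinuousOn.aemeasurable ?_ measurableSet_Ioo)
    exact ((hcd.mono hsub).norm).mul ((continuousOn_const.mul (hWc.mono hsub)).sqrt)
  have hq : ContinuousOn (fun t => ‖ζ‖ / W t) (Icc 0 1) :=
    continuousOn_const.div hWc fun t ht => (hWpos t ht).ne'
  have m2 : AEMeasurable (fun t : ℝ => ENNReal.ofReal (√(‖ζ‖ / W t)))
      (volume.restrict (Ioo (0:ℝ) 1)) := by
    refine AEMeasurable.ennreal_ofReal (ContinuousOn.aemeasurable ?_ measurableSet_Ioo)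
    exact (hq.mono hsub).sqrt
  have hcs := ENNReal.lintegral_mul_le_Lp_mul_Lq (volume.restrict (Ioo (0:ℝ) 1))
    Real.HolderConjugate.two_two m1 m2
  have h2 := h1.trans hcs
  have e1 : ∫⁻ t in Ioo (0:ℝ) 1, ENNReal.ofReal (√(‖ζ‖ / W t)) ^ (2:ℝ) ≤ ENNReal.ofReal π := by
    have : ∫⁻ t in Ioo (0:ℝ) 1, ENNReal.ofReal (√(‖ζ‖ / W t)) ^ (2:ℝ) =
        ∫⁻ t in Ioo (0:ℝ) 1, ENNReal.ofReal (‖ζ‖ / W t) := by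
      refine setLIntegral_congr_fun measurableSet_Ioo fun t ht => ?_
      have hw := hWpos t (hsub ht)
      rw [ENNReal.rpow_two, ← ENNReal.ofReal_pow (by positivity), Real.sq_sqrt (by positivity)]
    rw [this, ← ofReal_integral_eq_lintegral_ofReal
      ((hq.integrableOn_Icc).mono_set hsub)
      ((ae_restrict_iff' measurableSet_Ioo).2 (Eventually.of_forall fun t ht => by
        have hw := hWpos t (hsub ht)
        simp only [Pi.zero_apply]; positivity))]
    apply ENNReal.ofReal_le_ofReal
    rw [← integral_Ioc_eq_integral_Ioo, ← intervalIntegral.integral_of_le zero_le_one]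
    have h0 : 0 < 1 - ‖a‖ := by linarith
    rw [intervalIntegral.integral_eq_sub_of_hasDerivAt (a := 0) (b := 1)
      (f := fun t : ℝ => -Real.arctan (UU a (t * ‖ζ‖)))
      (fun t ht => by
        rw [uIcc_of_le zero_le_one] at ht
        have hp := hta t ht
        have hp1 : 0 < 1 - t * ‖ζ‖ := by linarith
        have d1 : HasDerivAt (fun t : ℝ => (1 - t * ‖ζ‖) / (1 - ‖a‖)) (-‖ζ‖ / (1 - ‖a‖)) t := by
          simpa using (((hasDerivAt_id t).mul_const ‖ζ‖).const_sub 1).div_const (1 - ‖a‖)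
        have d2 := (d1.log (by positivity)).arctan.neg
        refine d2.congr_deriv ?_
        simp only [hW, UU]
        field_simp)
      (by
        apply ContinuousOn.intervalIntegrable
        rwa [uIcc_of_le zero_le_one])]
    have b1 := Real.arctan_lt_pi_div_two (UU a (0 * ‖ζ‖))
    have b2 := Real.neg_pi_div_two_lt_arctan (UU a (1 * ‖ζ‖))
    linarith
  have e2 : ∫⁻ t in Ioo (0:ℝ) 1, ENNReal.ofReal (‖deriv F ((t:ℂ) * ζ)‖ * √(‖ζ‖ * W t)) ^ (2:ℝ) =
      ∫⁻ t in Ioo (0:ℝ) 1, ENNReal.ofReal (‖deriv F ((t:ℂ) * ζ)‖ ^ 2 * (‖ζ‖ * W t)) := by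
    refine setLIntegral_congr_fun measurableSet_Ioo fun t ht => ?_
    have hw := hWpos t (hsub ht)
    rw [ENNReal.rpow_two, ← ENNReal.ofReal_pow (by positivity), mul_pow, Real.sq_sqrt (by positivity)]
  rw [ENNReal.ofReal_pow (norm_nonneg _)]
  calc ENNReal.ofReal ‖F ζ - F 0‖ ^ 2 ≤ _ := pow_le_pow_left₀ (by simp) h2 2
    _ = (∫⁻ t in Ioo (0:ℝ) 1, ENNReal.ofReal (‖deriv F ((t:ℂ) * ζ)‖ * √(‖ζ‖ * W t)) ^ (2:ℝ)) *
        ∫⁻ t in Ioo (0:ℝ) 1, ENNReal.ofReal (√(‖ζ‖ / W t)) ^ (2:ℝ) := by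
      rw [mul_pow, ← ENNReal.rpow_two, ← ENNReal.rpow_two, ← ENNReal.rpow_mul, ← ENNReal.rpow_mul]
      norm_num
    _ ≤ _ := by
      rw [e2, mul_comm]; gcongr

lemma UU_compare {a z w : ℂ} (ha : ‖a‖ < 1) (hz : ‖z‖ < 1) (h : ‖w - z‖ < (1 - ‖z‖) / 2) :
    (1 - ‖z‖)⁻¹ * (1 + UU a ‖z‖ ^ 2) ≤ 9 / 2 * ((1 + UU a ‖w‖ ^ 2) / (1 - ‖w‖)) := by
  have hw1 : ‖w‖ ≤ ‖z‖ + ‖w - z‖ := by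
    have : ‖w‖ ≤ ‖w - z‖ + ‖z‖ := by simpa using norm_add_le (w - z) z
    linarith
  have hw2 : ‖z‖ ≤ ‖w‖ + ‖w - z‖ := by
    have : ‖z‖ ≤ ‖z - w‖ + ‖w‖ := by simpa using norm_add_le (z - w) w
    rw [norm_sub_rev] at this
    linarith
  have p1 : 0 < 1 - ‖z‖ := by linarith
  have p2 : 0 < 1 - ‖w‖ := by linarith
  have p3 : 0 < 1 - ‖a‖ := by linarith
  have hU : |UU a ‖z‖ - UU a ‖w‖| ≤ 1 := by
    have e : UU a ‖z‖ - UU a ‖w‖ = Real.log ((1 - ‖z‖) / (1 - ‖w‖)) := by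
      simp only [UU]
      rw [Real.log_div p1.ne' p3.ne', Real.log_div p2.ne' p3.ne', Real.log_div p1.ne' p2.ne']
      ring
    rw [e, abs_le]
    constructor
    · have := Real.one_sub_inv_le_log_of_pos (x := (1 - ‖z‖) / (1 - ‖w‖)) (by positivity)
      rw [inv_div] at this
      have h2 : (1 - ‖w‖) / (1 - ‖z‖) ≤ 2 := by rw [div_le_iff₀ p1]; linarith
      linarith
    · have := Real.log_le_sub_one_of_pos (x := (1 - ‖z‖) / (1 - ‖w‖)) (by positivity)
      have h2 : (1 - ‖z‖) / (1 - ‖w‖) ≤ 2 := by rw [div_le_iff₀ p2]; linarith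
      linarith
  have hU2 : 1 + UU a ‖z‖ ^ 2 ≤ 3 * (1 + UU a ‖w‖ ^ 2) := by
    rw [abs_le] at hU
    nlinarith [sq_nonneg (UU a ‖w‖ - (UU a ‖z‖ - UU a ‖w‖))]
  have hinv : (1 - ‖z‖)⁻¹ ≤ 3 / 2 * (1 - ‖w‖)⁻¹ := by
    rw [← div_eq_mul_inv, inv_eq_one_div, div_le_div_iff₀ p1 p2]; linarith
  calc _ ≤ 3 / 2 * (1 - ‖w‖)⁻¹ * (3 * (1 + UU a ‖w‖ ^ 2)) := by gcongr
    _ = _ := by ring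

/-- The region used for the mean value estimate. -/
def RR (ζ : ℂ) : Set (ℝ × ℂ) := {p | ‖p.2 - (p.1 : ℂ) * ζ‖ < (1 - p.1 * ‖ζ‖) / 2}

lemma RR_meas (ζ : ℂ) : MeasurableSet (RR ζ) :=
  (isOpen_lt (by fun_prop) (by fun_prop)).measurableSet

lemma t_measure {s : ℝ} (hs : 0 < s) {ζ w : ℂ} (hζ : ‖ζ‖ < 1) (hw : ‖w‖ < 1) :
    ∫⁻ t in Ioo (0:ℝ) 1, ENNReal.ofReal ‖ζ‖ * (RR ζ).indicator 1 (t, w) ≤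
      ENNReal.ofReal (2 * (1 - ‖w‖) *
        (5 * (1 - ‖w‖) / ‖1 - (starRingEnd ℂ) w * ζ‖) ^ (2 * s)) := by
  have hd := norm_den_pos hw hζ
  have p : 0 < 1 - ‖w‖ := by linarith
  by_cases hex : ∃ t ∈ Ioo (0:ℝ) 1, (t, w) ∈ RR ζ
  swap
  · push Not at hex
    rw [setLIntegral_congr_fun (g := fun _ => 0) measurableSet_Ioo]
    · simp
    · intro t ht
      simp [indicator_of_notMem (hex t ht)]
  have hRw : ∀ t ∈ Ioo (0:ℝ) 1, (t, w) ∈ RR ζ → 2 * ‖w‖ - 1 < t * ‖ζ‖ ∧ t * ‖ζ‖ < 1 := by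
    intro t ht h
    have hn : ‖(t:ℂ) * ζ‖ = t * ‖ζ‖ := by rw [norm_mul, Complex.norm_real, Real.norm_of_nonneg ht.1.le]
    have h' : ‖w - (t:ℂ) * ζ‖ < (1 - t * ‖ζ‖) / 2 := h
    have hw1 : ‖w‖ ≤ ‖w - (t:ℂ) * ζ‖ + ‖(t:ℂ) * ζ‖ := by
      simpa using norm_add_le (w - (t:ℂ) * ζ) ((t:ℂ) * ζ)
    rw [hn] at hw1
    constructor
    · linarith
    · nlinarith [norm_nonneg ζ, ht.1, ht.2]
  have h5 : ‖1 - (starRingEnd ℂ) w * ζ‖ ≤ 5 * (1 - ‖w‖) := by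
    obtain ⟨t, ht, h⟩ := hex
    have hb := hRw t ht h
    have h' : ‖w - (t:ℂ) * ζ‖ < (1 - t * ‖ζ‖) / 2 := h
    have e : 1 - (starRingEnd ℂ) w * ζ = ((1 - t * ‖ζ‖ ^ 2 : ℝ) : ℂ) -
        (starRingEnd ℂ) (w - (t:ℂ) * ζ) * ζ := by
      push_cast
      rw [← Complex.conj_mul', map_sub, map_mul, Complex.conj_ofReal]; ring
    rw [e]
    refine (norm_sub_le _ _).trans ?_
    have h2 : t * ‖ζ‖ ^ 2 ≤ 1 := by nlinarith [norm_nonneg ζ, ht.1, ht.2]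
    rw [norm_mul, RCLike.norm_conj, Complex.norm_real, Real.norm_of_nonneg (by linarith)]
    have h3 : ‖w - (t:ℂ) * ζ‖ * ‖ζ‖ ≤ ‖w - (t:ℂ) * ζ‖ * 1 := by gcongr
    have h4 : t * ‖ζ‖ ≤ ‖ζ‖ := by nlinarith [norm_nonneg ζ, ht.1, ht.2]
    nlinarith [norm_nonneg ζ, ht.1, ht.2]
  have hone : 1 ≤ (5 * (1 - ‖w‖) / ‖1 - (starRingEnd ℂ) w * ζ‖) ^ (2 * s) := by
    apply Real.one_le_rpow _ (by positivity)
    rw [le_div_iff₀ hd]; linarith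
  refine le_trans ?_ (ENNReal.ofReal_le_ofReal (le_mul_of_one_le_right (by positivity) hone))
  rcases eq_or_ne ζ 0 with rfl | hζ0
  · simp
  have hζp : 0 < ‖ζ‖ := norm_pos_iff.2 hζ0
  rw [lintegral_const_mul' _ _ (by simp)]
  have : ∫⁻ t in Ioo (0:ℝ) 1, (RR ζ).indicator 1 (t, w) ≤
      ENNReal.ofReal (2 * (1 - ‖w‖) / ‖ζ‖) := by
    calc ∫⁻ t in Ioo (0:ℝ) 1, (RR ζ).indicator 1 (t, w)
        ≤ ∫⁻ t in Ioo (0:ℝ) 1, (Ioo ((2 * ‖w‖ - 1) / ‖ζ‖) (1 / ‖ζ‖)).indicator 1 t := by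
          refine setLIntegral_mono' measurableSet_Ioo fun t ht => ?_
          by_cases h : (t, w) ∈ RR ζ
          · have hb := hRw t ht h
            rw [indicator_of_mem h, indicator_of_mem]
            · rfl
            · rw [mem_Ioo, div_lt_iff₀ hζp, lt_div_iff₀ hζp]; exact hb
          · rw [indicator_of_notMem h]; exact zero_le
      _ ≤ ∫⁻ t, (Ioo ((2 * ‖w‖ - 1) / ‖ζ‖) (1 / ‖ζ‖)).indicator 1 t := setLIntegral_le_lintegral _ _
      _ = _ := by
          rw [lintegral_indicator_one measurableSet_Ioo, Real.volume_Ioo]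
          congr 1; field_simp; ring
  calc _ ≤ ENNReal.ofReal ‖ζ‖ * ENNReal.ofReal (2 * (1 - ‖w‖) / ‖ζ‖) := by gcongr
    _ = _ := by rw [← ENNReal.ofReal_mul (norm_nonneg _)]; congr 1; field_simp

lemma kernel_est {F : ℂ → ℂ} (hF : HolOn F) {s : ℝ} (hs : 0 < s) {a ζ : ℂ} (ha : ‖a‖ < 1)
    (hζ : ‖ζ‖ < 1) :
    ENNReal.ofReal (‖F ζ - F 0‖ ^ 2) ≤ ENNReal.ofReal (36 * π) *
      ∫⁻ w in Metric.ball (0:ℂ) 1, ENNReal.ofReal (‖deriv F w‖ ^ 2 * (1 + UU a ‖w‖ ^ 2) *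
        (5 * (1 - ‖w‖) / ‖1 - (starRingEnd ℂ) w * ζ‖) ^ (2 * s)) ∂dA := by
  set Φ : ℂ → ENNReal := fun w =>
    ENNReal.ofReal (‖deriv F w‖ ^ 2 * ((1 + UU a ‖w‖ ^ 2) / (1 - ‖w‖))) with hΦ
  have hUm : Measurable (UU a) := by unfold UU; fun_prop
  have hΦm : AEMeasurable Φ (dA.restrict (Metric.ball (0:ℂ) 1)) := by
    have h1 := aemeas_of_contOn hF.deriv'.cont
    have h2 : Measurable fun w : ℂ => (1 + UU a ‖w‖ ^ 2) / (1 - ‖w‖) := by fun_prop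
    exact ((h1.norm.pow_const 2).mul h2.aemeasurable).ennreal_ofReal
  have hpt : ∀ t ∈ Ioo (0:ℝ) 1, ENNReal.ofReal (‖deriv F ((t:ℂ) * ζ)‖ ^ 2 *
        (‖ζ‖ * ((1 - t * ‖ζ‖) * (1 + UU a (t * ‖ζ‖) ^ 2)))) ≤
      ∫⁻ w in Metric.ball (0:ℂ) 1, ENNReal.ofReal 18 *
        (ENNReal.ofReal ‖ζ‖ * (RR ζ).indicator 1 (t, w) * Φ w) ∂dA := by
    intro t ht
    have hn : ‖(t:ℂ) * ζ‖ = t * ‖ζ‖ := by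
      rw [norm_mul, Complex.norm_real, Real.norm_of_nonneg ht.1.le]
    have hz : ‖(t:ℂ) * ζ‖ < 1 := by
      rw [hn]; nlinarith [norm_nonneg ζ, ht.1, ht.2]
    rw [← hn]
    set z := (t:ℂ) * ζ with hzd
    have p1 : 0 < 1 - ‖z‖ := by linarith
    have hm := mean_value_sq hF.deriv' (z := z) (r := (1 - ‖z‖) / 2) (by linarith) (by linarith)
    set c : ℝ := 4 * ‖ζ‖ * ((1 - ‖z‖)⁻¹ * (1 + UU a ‖z‖ ^ 2)) with hc
    have hc0 : 0 ≤ c := by positivity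
    calc ENNReal.ofReal (‖deriv F z‖ ^ 2 * (‖ζ‖ * ((1 - ‖z‖) * (1 + UU a ‖z‖ ^ 2))))
        = ENNReal.ofReal c * ENNReal.ofReal (((1 - ‖z‖) / 2) ^ 2 * ‖deriv F z‖ ^ 2) := by
          rw [← ENNReal.ofReal_mul hc0]
          congr 1
          rw [hc]; field_simp; norm_num
      _ ≤ ENNReal.ofReal c * ∫⁻ w in Metric.ball z ((1 - ‖z‖) / 2),
            ENNReal.ofReal (‖deriv F w‖ ^ 2) ∂dA := by gcongr
      _ = ∫⁻ w in Metric.ball z ((1 - ‖z‖) / 2),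
            ENNReal.ofReal c * ENNReal.ofReal (‖deriv F w‖ ^ 2) ∂dA := by
          rw [lintegral_const_mul' _ _ (by simp)]
      _ ≤ ∫⁻ w in Metric.ball z ((1 - ‖z‖) / 2), ENNReal.ofReal 18 *
        (ENNReal.ofReal ‖ζ‖ * (RR ζ).indicator 1 (t, w) * Φ w) ∂dA := by
          refine setLIntegral_mono' measurableSet_ball fun w hw => ?_
          rw [Metric.mem_ball, dist_eq_norm] at hw
          have hmem : (t, w) ∈ RR ζ := by
            show ‖w - (t:ℂ) * ζ‖ < (1 - t * ‖ζ‖) / 2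
            rw [← hn]; exact hw
          have hcmp := UU_compare ha hz hw
          rw [indicator_of_mem hmem, Pi.one_apply, mul_one, hΦ, ← ENNReal.ofReal_mul hc0,
            ← ENNReal.ofReal_mul (norm_nonneg _), ← ENNReal.ofReal_mul (by norm_num)]
          apply ENNReal.ofReal_le_ofReal
          rw [hc]
          have := mul_le_mul_of_nonneg_left hcmp
            (by positivity : 0 ≤ 4 * ‖ζ‖ * ‖deriv F w‖ ^ 2)
          linarith
      _ ≤ _ := by
          apply lintegral_mono_set
          intro w hw
          rw [Metric.mem_ball, dist_eq_norm] at hw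
          exact mem_D.2 (phi_near hz hw.le).1
  have hind : Measurable (fun p : ℝ × ℂ => (RR ζ).indicator (1 : ℝ × ℂ → ENNReal) p) :=
    measurable_one.indicator (RR_meas ζ)
  calc ENNReal.ofReal (‖F ζ - F 0‖ ^ 2) ≤ _ := path_sq hF ha hζ
    _ ≤ ENNReal.ofReal π * ∫⁻ t in Ioo (0:ℝ) 1, ∫⁻ w in Metric.ball (0:ℂ) 1, ENNReal.ofReal 18 *
        (ENNReal.ofReal ‖ζ‖ * (RR ζ).indicator 1 (t, w) * Φ w) ∂dA := by
      exact mul_le_mul' le_rfl (setLIntegral_mono' measurableSet_Ioo hpt)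
    _ = ENNReal.ofReal π * ∫⁻ w in Metric.ball (0:ℂ) 1, ∫⁻ t in Ioo (0:ℝ) 1, ENNReal.ofReal 18 *
        (ENNReal.ofReal ‖ζ‖ * (RR ζ).indicator 1 (t, w) * Φ w) ∂volume ∂dA := by
      rw [lintegral_lintegral_swap]
      refine AEMeasurable.const_mul (AEMeasurable.mul ?_ ?_) _
      · exact (hind.aemeasurable).const_mul _
      · exact hΦm.comp_snd
    _ ≤ ENNReal.ofReal π * ∫⁻ w in Metric.ball (0:ℂ) 1, ENNReal.ofReal 36 *
        ENNReal.ofReal (‖deriv F w‖ ^ 2 * (1 + UU a ‖w‖ ^ 2) *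
        (5 * (1 - ‖w‖) / ‖1 - (starRingEnd ℂ) w * ζ‖) ^ (2 * s)) ∂dA := by
      refine mul_le_mul' le_rfl (setLIntegral_mono' measurableSet_ball fun w hw => ?_)
      rw [mem_D] at hw
      have p1 : 0 < 1 - ‖w‖ := by linarith
      have hd := norm_den_pos hw hζ
      rw [lintegral_const_mul' _ _ (by simp), lintegral_mul_const' _ _ ENNReal.ofReal_ne_top]
      calc _ ≤ ENNReal.ofReal 18 * (ENNReal.ofReal (2 * (1 - ‖w‖) *
              (5 * (1 - ‖w‖) / ‖1 - (starRingEnd ℂ) w * ζ‖) ^ (2 * s)) * Φ w) := by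
            gcongr; exact t_measure hs hζ hw
        _ = _ := by
            rw [hΦ, ← ENNReal.ofReal_mul (by positivity), ← ENNReal.ofReal_mul (by positivity),
              ← ENNReal.ofReal_mul (by positivity)]
            congr 1
            field_simp
            ring
    _ = _ := by
      rw [lintegral_const_mul' _ _ (by simp), ← mul_assoc, ← ENNReal.ofReal_mul (by positivity)]
      congr 2; ring

lemma UU_le_log {a w : ℂ} (ha : ‖a‖ < 1) (hw : ‖w‖ < 1) :
    1 + UU a ‖w‖ ^ 2 ≤ 8 * Real.log (2 / (1 - ‖phi a w‖)) ^ 2 := by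
  have p1 : 0 < 1 - ‖a‖ := by linarith
  have p2 : 0 < 1 - ‖w‖ := by linarith
  have hphi := phi_lt_one ha hw
  have p3 : 0 < 1 - ‖phi a w‖ := by linarith
  have hd := norm_den_pos ha hw
  have hle : 1 - ‖phi a w‖ ≤ 4 * ((1 - ‖a‖) * (1 - ‖w‖)) / ‖1 - (starRingEnd ℂ) a * w‖ ^ 2 := by
    have h1 : 1 - ‖phi a w‖ ≤ 1 - ‖phi a w‖ ^ 2 := by nlinarith [norm_nonneg (phi a w)]
    rw [one_sub_phi ha hw] at h1
    refine h1.trans ?_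
    apply div_le_div_of_nonneg_right _ (by positivity)
    have e1 : 1 - ‖a‖ ^ 2 ≤ 2 * (1 - ‖a‖) := by nlinarith [norm_nonneg a]
    have e2 : 1 - ‖w‖ ^ 2 ≤ 2 * (1 - ‖w‖) := by nlinarith [norm_nonneg w]
    have e3 : 0 ≤ 1 - ‖w‖ ^ 2 := by nlinarith [norm_nonneg w]
    calc _ ≤ (2 * (1 - ‖a‖)) * (2 * (1 - ‖w‖)) := mul_le_mul e1 e2 e3 (by linarith)
      _ = _ := by ring
  set L := Real.log (2 / (1 - ‖phi a w‖)) with hL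
  have hL2 : Real.log 2 ≤ L := by
    apply Real.log_le_log (by norm_num)
    rw [le_div_iff₀ p3]; nlinarith [norm_nonneg (phi a w)]
  have key : ∀ x y : ℝ, 0 < x → 0 < y → 1 - ‖phi a w‖ ≤ 4 * (x * y) / x ^ 2 →
      Real.log (x / y) ≤ 2 * L := by
    intro x y hx hy h
    have : x / y ≤ 2 * (2 / (1 - ‖phi a w‖)) := by
      rw [← mul_div_assoc, div_le_div_iff₀ hy p3]
      rw [le_div_iff₀ (by positivity)] at h
      have : x * (1 - ‖phi a w‖) * x ≤ (2 * 2 * y) * x := by nlinarith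
      exact le_of_mul_le_mul_right this hx
    have h2 := Real.log_le_log (by positivity) this
    rw [Real.log_mul (by norm_num) (by positivity)] at h2
    linarith
  have u1 : Real.log ((1 - ‖w‖) / (1 - ‖a‖)) ≤ 2 * L := by
    apply key _ _ p2 p1
    refine hle.trans ?_
    rw [mul_comm (1 - ‖a‖)]
    gcongr
    exact norm_den_ge_right ha hw
  have u2 : Real.log ((1 - ‖a‖) / (1 - ‖w‖)) ≤ 2 * L := by
    apply key _ _ p1 p2
    refine hle.trans ?_
    gcongr
    exact norm_den_ge_left ha hw
  rw [← inv_div, Real.log_inv] at u2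
  have hl := Real.log_two_gt_d9
  have : UU a ‖w‖ ^ 2 ≤ (2 * L) ^ 2 := by
    unfold UU
    apply sq_le_sq'
    · linarith
    · exact u1
  nlinarith

/-- The embedding lemma. -/
lemma embedding {F v : ℂ → ℂ} (hF : HolOn F) (hv : ContinuousOn v (Metric.ball (0:ℂ) 1))
    {s : ℝ} (hs : 0 < s) {a : ℂ} (ha : ‖a‖ < 1) {M : ENNReal} (hMt : M ≠ ⊤)
    (hM : ∀ c : ℂ, ‖c‖ < 1 →
      ENNReal.ofReal (Real.log (2 / (1 - ‖phi a c‖)) ^ 2) * NN v s c ≤ M) :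
    NN (fun ζ => (F ζ - F 0) * v ζ) s 0 ≤
      ENNReal.ofReal (288 * π * 25 ^ s) * M * NN (deriv F) s 0 := by
  have hUm : Measurable (UU a) := by unfold UU; fun_prop
  set k : ℂ → ℂ → ENNReal := fun ζ w => ENNReal.ofReal (‖v ζ‖ ^ 2 * (1 - ‖phi w ζ‖ ^ 2) ^ s) with hk
  set D : ℂ → ENNReal := fun w =>
    ENNReal.ofReal (‖deriv F w‖ ^ 2 * (1 + UU a ‖w‖ ^ 2) * (1 - ‖w‖ ^ 2) ^ s) with hD
  set c0 : ENNReal := ENNReal.ofReal (36 * π * 25 ^ s) with hc0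
  have hvm := aemeas_of_contOn hv
  have hDm : AEMeasurable D (dA.restrict (Metric.ball (0:ℂ) 1)) := by
    have h1 := aemeas_of_contOn hF.deriv'.cont
    have h2 : Measurable fun w : ℂ => (1 + UU a ‖w‖ ^ 2) := by fun_prop
    have h3 : Measurable fun w : ℂ => (1 - ‖w‖ ^ 2) ^ s := by fun_prop
    exact (((h1.norm.pow_const 2).mul h2.aemeasurable).mul h3.aemeasurable).ennreal_ofReal
  have hkm : AEMeasurable (Function.uncurry k)
      ((dA.restrict (Metric.ball (0:ℂ) 1)).prod (dA.restrict (Metric.ball (0:ℂ) 1))) := by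
    have h1 : AEMeasurable (fun p : ℂ × ℂ => v p.1)
      ((dA.restrict (Metric.ball (0:ℂ) 1)).prod (dA.restrict (Metric.ball (0:ℂ) 1))) := hvm.comp_fst
    have h0 : Measurable fun p : ℂ × ℂ => phi p.2 p.1 := by
      unfold phi
      have : Measurable fun p : ℂ × ℂ => (starRingEnd ℂ) p.2 :=
        (Complex.continuous_conj.comp continuous_snd).measurable
      fun_prop
    have h3 : Measurable fun p : ℂ × ℂ => (1 - ‖phi p.2 p.1‖ ^ 2) ^ s := by fun_prop
    exact ((h1.norm.pow_const 2).mul h3.aemeasurable).ennreal_ofReal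
  calc NN (fun ζ => (F ζ - F 0) * v ζ) s 0
      ≤ ∫⁻ ζ in Metric.ball (0:ℂ) 1, ∫⁻ w in Metric.ball (0:ℂ) 1, c0 * (k ζ w * D w) ∂dA ∂dA := by
        refine setLIntegral_mono' measurableSet_ball fun ζ hζ => ?_
        rw [mem_D] at hζ
        have q1 : 0 ≤ 1 - ‖ζ‖ ^ 2 := by nlinarith [norm_nonneg ζ]
        have q2 : 0 ≤ (1 - ‖ζ‖ ^ 2) ^ s := Real.rpow_nonneg q1 _
        rw [phi_zero_left, norm_neg, norm_mul, mul_pow, mul_assoc,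
          ENNReal.ofReal_mul (by positivity)]
        calc _ ≤ _ := mul_le_mul_left (kernel_est hF hs ha hζ) _
          _ = ∫⁻ w in Metric.ball (0:ℂ) 1, ENNReal.ofReal (36 * π) *
              ENNReal.ofReal (‖v ζ‖ ^ 2 * (1 - ‖ζ‖ ^ 2) ^ s) *
              ENNReal.ofReal (‖deriv F w‖ ^ 2 * (1 + UU a ‖w‖ ^ 2) *
              (5 * (1 - ‖w‖) / ‖1 - (starRingEnd ℂ) w * ζ‖) ^ (2 * s)) ∂dA := by
            rw [lintegral_const_mul' _ _ (by finiteness)]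
            ring
          _ ≤ _ := by
            refine setLIntegral_mono' measurableSet_ball fun w hw => ?_
            rw [mem_D] at hw
            have p1 : 0 < 1 - ‖w‖ := by linarith
            have p2 : 0 < 1 - ‖w‖ ^ 2 := by nlinarith [norm_nonneg w]
            have hd := norm_den_pos hw hζ
            have p3 := one_sub_phi_pos hw hζ
            rw [hc0, hk, hD]
            rw [← ENNReal.ofReal_mul (by positivity), ← ENNReal.ofReal_mul (by positivity),
              ← ENNReal.ofReal_mul (by positivity), ← ENNReal.ofReal_mul (by positivity)]
            apply ENNReal.ofReal_le_ofReal
            have hmain : (1 - ‖ζ‖ ^ 2) ^ s *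
                (5 * (1 - ‖w‖) / ‖1 - (starRingEnd ℂ) w * ζ‖) ^ (2 * s) ≤
                25 ^ s * (1 - ‖phi w ζ‖ ^ 2) ^ s * (1 - ‖w‖ ^ 2) ^ s := by
              rw [Real.rpow_mul (by positivity), Real.rpow_two, ← Real.mul_rpow q1 (by positivity),
                ← Real.mul_rpow (by positivity) p3.le, ← Real.mul_rpow (by positivity) p2.le]
              apply Real.rpow_le_rpow (by positivity) _ hs.le
              rw [one_sub_phi hw hζ, div_pow, ← mul_div_assoc, ← mul_div_assoc, div_mul_eq_mul_div]
              apply div_le_div_of_nonneg_right _ (by positivity)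
              have : (1 - ‖w‖) ^ 2 ≤ (1 - ‖w‖ ^ 2) ^ 2 := by
                gcongr 
                nlinarith [norm_nonneg w]
              nlinarith [mul_le_mul_of_nonneg_left this q1]
            have := mul_le_mul_of_nonneg_left hmain (by positivity :
              0 ≤ 36 * π * ‖v ζ‖ ^ 2 * (‖deriv F w‖ ^ 2 * (1 + UU a ‖w‖ ^ 2)))
            linarith
    _ = ∫⁻ w in Metric.ball (0:ℂ) 1, ∫⁻ ζ in Metric.ball (0:ℂ) 1, c0 * (k ζ w * D w) ∂dA ∂dA := by
        rw [lintegral_lintegral_swap]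
        exact (hkm.mul hDm.comp_snd).const_mul _
    _ ≤ ∫⁻ w in Metric.ball (0:ℂ) 1, c0 * (ENNReal.ofReal 8 * M *
          ENNReal.ofReal (‖deriv F w‖ ^ 2 * (1 - ‖phi 0 w‖ ^ 2) ^ s)) ∂dA := by
        refine setLIntegral_mono' measurableSet_ball fun w hw => ?_
        rw [mem_D] at hw
        have p2 : 0 ≤ (1 - ‖w‖ ^ 2) ^ s := Real.rpow_nonneg (by nlinarith [norm_nonneg w]) _
        rw [lintegral_const_mul' _ _ (by simp [hc0]), lintegral_mul_const' _ _ ENNReal.ofReal_ne_top]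
        gcongr c0 * ?_
        have e : ∫⁻ ζ in Metric.ball (0:ℂ) 1, k ζ w ∂dA = NN v s w := rfl
        rw [e, phi_zero_left, norm_neg]
        calc NN v s w * ENNReal.ofReal (‖deriv F w‖ ^ 2 * (1 + UU a ‖w‖ ^ 2) * (1 - ‖w‖ ^ 2) ^ s)
            ≤ NN v s w * ENNReal.ofReal (8 * Real.log (2 / (1 - ‖phi a w‖)) ^ 2 *
                (‖deriv F w‖ ^ 2 * (1 - ‖w‖ ^ 2) ^ s)) := by
              refine mul_le_mul' le_rfl (ENNReal.ofReal_le_ofReal ?_)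
              have := mul_le_mul_of_nonneg_left (UU_le_log ha hw)
                (by positivity : 0 ≤ ‖deriv F w‖ ^ 2 * (1 - ‖w‖ ^ 2) ^ s)
              linarith
          _ = ENNReal.ofReal 8 * (ENNReal.ofReal (Real.log (2 / (1 - ‖phi a w‖)) ^ 2) * NN v s w) *
                ENNReal.ofReal (‖deriv F w‖ ^ 2 * (1 - ‖w‖ ^ 2) ^ s) := by
              rw [ENNReal.ofReal_mul (by positivity), ENNReal.ofReal_mul (by positivity)]
              ring
          _ ≤ _ := by
              gcongr
              exact hM w hw
    _ ≤ _ := by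
        rw [lintegral_const_mul' _ _ (by simp [hc0])]
        rw [lintegral_const_mul' _ _ (by finiteness), NN, hc0, ← mul_assoc, ← mul_assoc,
          ← ENNReal.ofReal_mul (by positivity)]
        apply le_of_eq
        congr 3
        ring

/-- The Bloch constant associated with a bound `C`. -/
noncomputable def BB (s : ℝ) (C : ENNReal) : ℝ := √((ENNReal.ofReal (4 * 16 ^ s) * C).toReal)

lemma BB_nonneg (s : ℝ) (C : ENNReal) : 0 ≤ BB s C := Real.sqrt_nonneg _

lemma bloch_of_NN {u : ℂ → ℂ} (hu : HolOn u) {s : ℝ} (hs : 0 < s) {C : ENNReal} (hC : C < ⊤)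
    {z : ℂ} (hz : ‖z‖ < 1) (h : NN u s z ≤ C) : (1 - ‖z‖) * ‖u z‖ ≤ BB s C := by
  have h1 := (pointwise_le_NN hu hs hz).trans (mul_le_mul' le_rfl h)
  apply Real.le_sqrt_of_sq_le
  rw [mul_pow]
  exact (ENNReal.ofReal_le_iff_le_toReal (ENNReal.mul_ne_top ENNReal.ofReal_ne_top hC.ne)).1 h1

lemma growth_NN {f : ℂ → ℂ} (hf : HolOn f) {s : ℝ} (hs : 0 < s) {C : ENNReal} (hC : C < ⊤)
    (h : ∀ a : ℂ, ‖a‖ < 1 → NN (deriv f) s a ≤ C) {a : ℂ} (ha : ‖a‖ < 1) :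
    ‖f a - f 0‖ ≤ BB s C * Real.log (1 / (1 - ‖a‖)) :=
  growth hf (fun z hz => bloch_of_NN hf.deriv' hs hC hz (h z hz)) ha

lemma log_two_le {a : ℂ} (ha : ‖a‖ < 1) : Real.log 2 ≤ Real.log (2 / (1 - ‖a‖)) := by
  apply Real.log_le_log (by norm_num)
  rw [le_div_iff₀ (by linarith)]; nlinarith [norm_nonneg a]

lemma NN_const_mul {u : ℂ → ℂ} {s : ℝ} {a : ℂ} (ha : ‖a‖ < 1) (k : ℂ) :
    NN (fun z => k * u z) s a ≤ ENNReal.ofReal (‖k‖ ^ 2) * NN u s a :=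
  NN_mono ha (norm_nonneg k) fun z _ => by rw [norm_mul]

lemma suff_T {g f : ℂ → ℂ} {s : ℝ} (hs : 0 < s) (hg : g ∈ QsLog s 1) (hf : f ∈ Qs s) :
    ∃ C : ENNReal, C < ⊤ ∧ ∀ a : ℂ, ‖a‖ < 1 → NN (fun z => deriv g z * f z) s a ≤ C := by
  obtain ⟨hgh, M, hMt, hM⟩ := mem_QsLog.1 hg
  obtain ⟨hfh, C, hCt, hC⟩ := mem_Qs.1 hf
  set K : ℝ := 2 * ‖f 0‖ + BB s C with hK
  have hK0 : 0 ≤ K := by have := BB_nonneg s C; positivity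
  have hfa : ∀ a : ℂ, ‖a‖ < 1 → ‖f a‖ ≤ K * Real.log (2 / (1 - ‖a‖)) := by
    intro a ha
    have h1 := growth_NN hfh hs hCt hC ha
    have h2 := log_two_le ha
    have h3 : Real.log (1 / (1 - ‖a‖)) ≤ Real.log (2 / (1 - ‖a‖)) := by
      have : 0 < 1 - ‖a‖ := by linarith
      apply Real.log_le_log (by positivity); gcongr; norm_num
    have h4 : ‖f a‖ ≤ ‖f a - f 0‖ + ‖f 0‖ := by
      simpa using norm_add_le (f a - f 0) (f 0)
    have := Real.log_two_gt_d9
    have h5 := mul_le_mul_of_nonneg_left h3 (BB_nonneg s C)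
    nlinarith [norm_nonneg (f 0)]
  refine ⟨2 * (ENNReal.ofReal (K ^ 2) * M + ENNReal.ofReal (288 * π * 25 ^ s) * M * C), ?_, ?_⟩
  · finiteness
  intro a ha
  have h1 : NN (fun z => f a * deriv g z) s a ≤ ENNReal.ofReal (K ^ 2) * M := by
    refine (NN_const_mul ha _).trans ?_
    calc _ ≤ ENNReal.ofReal (K ^ 2 * Real.log (2 / (1 - ‖a‖)) ^ 2) * NN (deriv g) s a := by
          refine mul_le_mul' (ENNReal.ofReal_le_ofReal ?_) le_rfl
          rw [← mul_pow]
          exact pow_le_pow_left₀ (norm_nonneg _) (hfa a ha) 2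
      _ = ENNReal.ofReal (K ^ 2) *
          (ENNReal.ofReal (Real.log (2 / (1 - ‖a‖)) ^ 2) * NN (deriv g) s a) := by
          rw [ENNReal.ofReal_mul (by positivity), mul_assoc]
      _ ≤ _ := mul_le_mul' le_rfl (hM a ha)
  have hmaps : MapsTo (phi a) (Metric.ball (0:ℂ) 1) (Metric.ball (0:ℂ) 1) := fun w hw =>
    mem_D.2 (phi_lt_one ha (mem_D.1 hw))
  have hphol : HolOn (phi a) := fun w hw =>
    (hasDerivAt_phi ha (mem_D.1 hw)).differentiableAt.differentiableWithinAt
  have hF : HolOn (fun w => f (phi a w)) := DifferentiableOn.comp hfh hphol hmaps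
  have hv : ContinuousOn (fun w => deriv g (phi a w) * deriv (phi a) w) (Metric.ball (0:ℂ) 1) :=
    (hgh.deriv'.cont.comp hphol.cont hmaps).mul hphol.deriv'.cont
  have h2 : NN (fun z => (f z - f a) * deriv g z) s a ≤
      ENNReal.ofReal (288 * π * 25 ^ s) * M * C := by
    have z1 : ‖(0:ℂ)‖ < 1 := by simp
    have e1 := NN_phi ha z1 (fun z => (f z - f a) * deriv g z) s
    have e2 := NN_phi ha z1 (deriv f) s
    rw [phi_zero_right] at e1 e2
    have e3 := embedding hF hv hs ha hMt.ne (fun c hc => by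
      rw [NN_phi ha hc (deriv g) s]
      exact hM _ (phi_lt_one ha hc))
    rw [← e1]
    calc _ = _ := NN_congr (fun w hw => by
            simp only [phi_zero_right]; ring)
      _ ≤ _ := e3
      _ ≤ _ := by
        refine mul_le_mul' le_rfl ?_
        rw [NN_congr (v := fun w => deriv f (phi a w) * deriv (phi a) w), e2]
        · exact hC a ha
        · intro w hw
          rw [mem_D] at hw
          have d1 := hasDerivAt_phi ha hw
          have d2 := (hfh.diffAt (phi_lt_one ha hw)).hasDerivAt
          rw [d1.deriv]
          exact (d2.comp w d1).deriv
  refine (NN_add_le ha (u := fun z => f a * deriv g z) (v := fun z => (f z - f a) * deriv g z)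
    ?_ ?_).trans ?_
  · exact (aemeas_of_contOn hgh.deriv'.cont).const_mul _
  · intro z hz; ring
  · gcongr

lemma Qs_mono {s t : ℝ} (h : s ≤ t) {f : ℂ → ℂ} (hf : f ∈ Qs s) : f ∈ Qs t := by
  obtain ⟨hfh, C, hCt, hC⟩ := mem_Qs.1 hf
  exact mem_Qs.2 ⟨hfh, C, hCt, fun a ha => (NN_exp_mono ha h).trans (hC a ha)⟩

lemma suff_I {g f : ℂ → ℂ} {s : ℝ} (hg : g ∈ Hinf) (hf : f ∈ Qs s) :
    ∃ C : ENNReal, C < ⊤ ∧ ∀ a : ℂ, ‖a‖ < 1 → NN (fun z => g z * deriv f z) s a ≤ C := by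
  obtain ⟨hgh, K, hK⟩ := hg
  obtain ⟨hfh, C, hCt, hC⟩ := mem_Qs.1 hf
  have hK0 : 0 ≤ K := (norm_nonneg _).trans (hK 0 (by simp))
  refine ⟨ENNReal.ofReal (K ^ 2) * C, by finiteness, fun a ha => ?_⟩
  refine (NN_mono ha hK0 (v := deriv f) fun z hz => ?_).trans (mul_le_mul' le_rfl (hC a ha))
  rw [norm_mul]
  exact mul_le_mul_of_nonneg_right (hK z hz) (norm_nonneg _)

lemma Tg_mem {g f : ℂ → ℂ} {s : ℝ} (hg : HolOn g) (hf : HolOn f) : Tg g f ∈ Qs s ↔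
    ∃ C : ENNReal, C < ⊤ ∧ ∀ a : ℂ, ‖a‖ < 1 → NN (fun z => deriv g z * f z) s a ≤ C := by
  obtain ⟨h1, h2⟩ := Tg_hol hg hf
  rw [mem_Qs]
  have : ∀ a, NN (deriv (Tg g f)) s a = NN (fun z => deriv g z * f z) s a := fun a =>
    NN_congr fun z hz => h2 z (mem_D.1 hz)
  simp only [this, h1, true_and]

lemma Ig_mem {g f : ℂ → ℂ} {s : ℝ} (hg : HolOn g) (hf : HolOn f) : Ig g f ∈ Qs s ↔
    ∃ C : ENNReal, C < ⊤ ∧ ∀ a : ℂ, ‖a‖ < 1 → NN (fun z => g z * deriv f z) s a ≤ C := by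
  obtain ⟨h1, h2⟩ := Ig_hol hg hf
  rw [mem_Qs]
  have : ∀ a, NN (deriv (Ig g f)) s a = NN (fun z => g z * deriv f z) s a := fun a =>
    NN_congr fun z hz => h2 z (mem_D.1 hz)
  simp only [this, h1, true_and]

lemma Mg_mem {g f : ℂ → ℂ} {s : ℝ} (hg : HolOn g) (hf : HolOn f) : Mg g f ∈ Qs s ↔
    ∃ C : ENNReal, C < ⊤ ∧ ∀ a : ℂ, ‖a‖ < 1 →
      NN (fun z => deriv g z * f z + g z * deriv f z) s a ≤ C := by
  obtain ⟨h1, h2⟩ := Mg_hol hg hf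
  rw [mem_Qs]
  have : ∀ a, NN (deriv (Mg g f)) s a = NN (fun z => deriv g z * f z + g z * deriv f z) s a :=
    fun a => NN_congr fun z hz => h2 z (mem_D.1 hz)
  simp only [this, h1, true_and]

/-- boundedness is stable under sums -/
lemma bdd_add {u v w : ℂ → ℂ} {s : ℝ} (hu : HolOn u)
    (h : ∀ z ∈ Metric.ball (0:ℂ) 1, w z = u z + v z)
    (h1 : ∃ C : ENNReal, C < ⊤ ∧ ∀ a : ℂ, ‖a‖ < 1 → NN u s a ≤ C)
    (h2 : ∃ C : ENNReal, C < ⊤ ∧ ∀ a : ℂ, ‖a‖ < 1 → NN v s a ≤ C) :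
    ∃ C : ENNReal, C < ⊤ ∧ ∀ a : ℂ, ‖a‖ < 1 → NN w s a ≤ C := by
  obtain ⟨C, hC, h1⟩ := h1
  obtain ⟨C', hC', h2⟩ := h2
  refine ⟨2 * (C + C'), by finiteness, fun a ha => ?_⟩
  refine (NN_add_le ha (aemeas_of_contOn hu.cont) h).trans ?_
  exact mul_le_mul' le_rfl (add_le_add (h1 a ha) (h2 a ha))

/-- The singular integral constant. -/
noncomputable def SK (s : ℝ) : ENNReal :=
  ENNReal.ofReal (2 ^ s * (1 / 2) ^ (s - 2)) *
    ((ENNReal.ofReal π)⁻¹ * ∫⁻ w in Metric.ball (0:ℂ) 2, ENNReal.ofReal (‖w‖ ^ (s - 2)))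

lemma SK_lt_top {s : ℝ} (hs : 0 < s) : SK s < ⊤ := by
  have h : IntegrableOn (fun w : ℂ => ‖w‖ ^ (s - 2)) (Metric.ball (0:ℂ) 2) volume := by
    rw [integrableOn_fun_norm_addHaar volume (f := fun y : ℝ => y ^ (s - 2))]
    have h1 : IntegrableOn (fun y : ℝ => y ^ (s - 1)) (Ioo 0 2) :=
      (intervalIntegral.integrableOn_Ioo_rpow_iff (by norm_num)).2 (by linarith)
    refine h1.congr_fun (fun y hy => ?_) measurableSet_Ioo
    simp only [Complex.finrank_real_complex, smul_eq_mul]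
    rw [show s - 1 = 1 + (s - 2) by ring, Real.rpow_add hy.1]
    simp
  have h2 := h.lintegral_lt_top
  have h3 : (ENNReal.ofReal π)⁻¹ ≠ ⊤ := by simp [Real.pi_pos]
  exact ENNReal.mul_lt_top ENNReal.ofReal_lt_top (ENNReal.mul_lt_top h3.lt_top h2)

lemma kernel_int {s : ℝ} (hs : 0 < s) (hs1 : s ≤ 1) {b : ℂ} (hb : ‖b‖ < 1) :
    NN (fun w => 1 / (1 - (starRingEnd ℂ) b * w)) s 0 ≤ SK s := by
  obtain ⟨ζ, hζ, hζb⟩ : ∃ ζ : ℂ, ‖ζ‖ = 1 ∧ b = ‖b‖ * ζ := by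
    by_cases h : b = 0
    · exact ⟨1, by simp, by simp [h]⟩
    · refine ⟨b / ‖b‖, ?_, ?_⟩
      · simp [h]
      · have : (‖b‖ : ℂ) ≠ 0 := by simpa using h
        field_simp
  have hpt : ∀ w ∈ Metric.ball (0:ℂ) 1,
      ENNReal.ofReal (‖1 / (1 - (starRingEnd ℂ) b * w)‖ ^ 2 * (1 - ‖phi 0 w‖ ^ 2) ^ s) ≤
      ENNReal.ofReal (2 ^ s * (1 / 2) ^ (s - 2)) * ENNReal.ofReal (‖w - ζ‖ ^ (s - 2)) := by
    intro w hw
    rw [mem_D] at hw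
    have hd := norm_den_pos hb hw
    have hr := norm_den_ge_right hb hw
    have hl := norm_den_ge_left hb hw
    set d := ‖1 - (starRingEnd ℂ) b * w‖ with hdd
    have hz : 0 < ‖w - ζ‖ := by
      rw [norm_pos_iff, sub_ne_zero]; rintro rfl; linarith
    have hcz : (starRingEnd ℂ) ζ * ζ = 1 := by
      rw [mul_comm, Complex.mul_conj, Complex.normSq_eq_norm_sq, hζ]; simp
    have hle : ‖w - ζ‖ ≤ 2 * d := by
      have e1 : ‖w - ζ‖ = ‖1 - (starRingEnd ℂ) ζ * w‖ := by
        have : 1 - (starRingEnd ℂ) ζ * w = - ((starRingEnd ℂ) ζ * (w - ζ)) := by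
          rw [mul_sub, hcz]; ring
        rw [this, norm_neg, norm_mul, RCLike.norm_conj, hζ, one_mul]
      have e2 : 1 - (starRingEnd ℂ) ζ * w = (1 - (starRingEnd ℂ) b * w) +
          (-((1 - ‖b‖ : ℝ) : ℂ)) * ((starRingEnd ℂ) ζ * w) := by
        have : (starRingEnd ℂ) b = ‖b‖ * (starRingEnd ℂ) ζ := by
          conv_lhs => rw [hζb]
          simp
        rw [this]; push_cast; ring
      rw [e1, e2]
      refine (norm_add_le _ _).trans ?_
      rw [norm_mul, norm_neg, norm_mul, RCLike.norm_conj, hζ, Complex.norm_real,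
        Real.norm_of_nonneg (by linarith)]
      have : (1 - ‖b‖) * (1 * ‖w‖) ≤ 1 - ‖b‖ := by nlinarith [norm_nonneg w]
      linarith
    rw [← ENNReal.ofReal_mul (by positivity)]
    apply ENNReal.ofReal_le_ofReal
    rw [phi_zero_left, norm_neg, norm_div, norm_one, ← hdd, mul_assoc,
      ← Real.mul_rpow (by norm_num) hz.le]
    have h1 : (1 - ‖w‖ ^ 2) ^ s ≤ 2 ^ s * d ^ s := by
      rw [← Real.mul_rpow (by norm_num) hd.le]
      apply Real.rpow_le_rpow _ _ hs.le
      · nlinarith [norm_nonneg w]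
      · nlinarith [norm_nonneg w]
    have h2 : d ^ (s - 2) ≤ (1 / 2 * ‖w - ζ‖) ^ (s - 2) :=
      Real.rpow_le_rpow_of_nonpos (by positivity) (by linarith) (by linarith)
    calc (1 / d) ^ 2 * (1 - ‖w‖ ^ 2) ^ s ≤ (1 / d) ^ 2 * (2 ^ s * d ^ s) := by gcongr
      _ = 2 ^ s * d ^ (s - 2) := by
        rw [Real.rpow_sub hd, Real.rpow_two]; field_simp
      _ ≤ _ := by gcongr
  calc _ ≤ _ := setLIntegral_mono' measurableSet_ball hpt
    _ = ENNReal.ofReal (2 ^ s * (1 / 2) ^ (s - 2)) * ((ENNReal.ofReal π)⁻¹ *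
        ∫⁻ w in Metric.ball (0:ℂ) 1, ENNReal.ofReal (‖w - ζ‖ ^ (s - 2))) := by
      rw [lintegral_const_mul' _ _ (by simp), dA, Measure.restrict_smul, lintegral_smul_measure]
      rfl
    _ ≤ SK s := by
      unfold SK
      refine mul_le_mul' le_rfl (mul_le_mul' le_rfl ?_)
      have hs : Metric.ball (0:ℂ) 1 ⊆ (fun w => w - ζ) ⁻¹' Metric.ball (0:ℂ) 2 := by
        intro w hw
        rw [mem_D] at hw
        rw [mem_preimage, mem_ball_zero_iff]
        have := norm_sub_le w ζ
        linarith
      refine (lintegral_mono_set hs).trans ?_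
      have := (measurePreserving_sub_right (volume : Measure ℂ) ζ).setLIntegral_comp_preimage
        (s := Metric.ball (0:ℂ) 2) measurableSet_ball
        (f := fun w => ENNReal.ofReal (‖w‖ ^ (s - 2))) (by fun_prop)
      exact this.le

/-- derivative of the test function -/
noncomputable def td (a z : ℂ) : ℂ := -(starRingEnd ℂ) a / (1 - (starRingEnd ℂ) a * z)

lemma td_cont {a : ℂ} (ha : ‖a‖ < 1) : ContinuousOn (td a) (Metric.ball (0:ℂ) 1) := by
  unfold td
  refine ContinuousOn.div (by fun_prop) (by fun_prop) fun z hz => den_ne ha (mem_D.1 hz)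

lemma td_NN {s : ℝ} (hs : 0 < s) (hs1 : s ≤ 1) {a c : ℂ} (ha : ‖a‖ < 1) (hc : ‖c‖ < 1) :
    NN (td a) s c ≤ 4 * SK s := by
  have z1 : ‖(0:ℂ)‖ < 1 := by simp
  have e1 := NN_phi hc z1 (td a) s
  rw [phi_zero_right] at e1
  rw [← e1]
  set b := phi c a with hb
  have hb1 : ‖b‖ < 1 := phi_lt_one hc ha
  have key : ∀ b : ℂ, ‖b‖ < 1 → NN (td b) s 0 ≤ SK s := by
    intro b hb
    refine (NN_mono (v := fun w => 1 / (1 - (starRingEnd ℂ) b * w)) z1 zero_le_one ?_).trans ?_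
    · intro z hz
      rw [td, norm_div, norm_div, norm_neg, RCLike.norm_conj, norm_one, one_mul]
      gcongr
    · simpa using kernel_int hs hs1 hb
  have k2 : NN (fun w => (-1) * td c w) s 0 ≤ SK s := by
    refine (NN_const_mul z1 _).trans ?_
    simpa using key c hc
  refine (NN_add_le z1 (u := td b) (v := fun w => (-1) * td c w)
    (aemeas_of_contOn (td_cont hb1)) ?_).trans ?_
  · intro w hw
    rw [mem_D] at hw
    rw [(hasDerivAt_phi hc hw).deriv]
    have n1 := den_ne hc hw
    have n2 := den_ne hb1 hw
    have n3 := den_ne ha hc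
    have n4 := den_ne ha (phi_lt_one hc hw)
    have hbc : (starRingEnd ℂ) b * (1 - (starRingEnd ℂ) a * c) =
        (starRingEnd ℂ) c - (starRingEnd ℂ) a := by
      rw [hb, phi]
      simp only [map_div₀, map_sub, map_one, map_mul, Complex.conj_conj]
      rw [mul_comm c]
      field_simp
    have hB : (1 - (starRingEnd ℂ) a * phi c w) * (1 - (starRingEnd ℂ) c * w) =
        (1 - (starRingEnd ℂ) a * c) * (1 - (starRingEnd ℂ) b * w) := by
      have : (1 - (starRingEnd ℂ) a * c) * (1 - (starRingEnd ℂ) b * w) =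
        1 - (starRingEnd ℂ) a * c - w * ((starRingEnd ℂ) c - (starRingEnd ℂ) a) := by
        rw [← hbc]; ring
      have hp : phi c w * (1 - (starRingEnd ℂ) c * w) = c - w := div_mul_cancel₀ _ n1
      rw [this]
      linear_combination (-(starRingEnd ℂ) a) * hp
    unfold td
    have hL : 1 - (starRingEnd ℂ) a * phi c w = (1 - (starRingEnd ℂ) a * c) *
        (1 - (starRingEnd ℂ) b * w) / (1 - (starRingEnd ℂ) c * w) := by
      rw [eq_div_iff n1, hB]
    have hbe : (starRingEnd ℂ) b = ((starRingEnd ℂ) c - (starRingEnd ℂ) a) / 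
        (1 - (starRingEnd ℂ) a * c) := by rw [eq_div_iff n3, hbc]
    rw [hL]
    have hnum : (starRingEnd ℂ) c * (1 - (starRingEnd ℂ) b * w)
        - (starRingEnd ℂ) b * (1 - (starRingEnd ℂ) c * w) =
        (starRingEnd ℂ) a * (1 - (starRingEnd ℂ) c * c) / (1 - (starRingEnd ℂ) a * c) := by
      rw [eq_div_iff n3]
      linear_combination (-1) * hbc
    have hR : -(starRingEnd ℂ) b / (1 - (starRingEnd ℂ) b * w) +
        -1 * (-(starRingEnd ℂ) c / (1 - (starRingEnd ℂ) c * w)) =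
        ((starRingEnd ℂ) c * (1 - (starRingEnd ℂ) b * w)
        - (starRingEnd ℂ) b * (1 - (starRingEnd ℂ) c * w)) / 
        ((1 - (starRingEnd ℂ) b * w) * (1 - (starRingEnd ℂ) c * w)) := by
      rw [neg_one_mul, neg_div, neg_div, neg_neg, ← neg_div, div_add_div _ _ n2 n1]
      congr 1; ring
    rw [hR, hnum]
    field_simp
  · calc _ ≤ 2 * (SK s + SK s) := mul_le_mul' le_rfl (add_le_add (key b hb1) k2)
      _ = _ := by ring

lemma NN_aemeas {u : ℂ → ℂ} {s : ℝ} (a : ℂ)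
    (hu : AEMeasurable u (dA.restrict (Metric.ball (0:ℂ) 1))) :
    AEMeasurable (fun z => ENNReal.ofReal (‖u z‖ ^ 2 * (1 - ‖phi a z‖ ^ 2) ^ s))
      (dA.restrict (Metric.ball (0:ℂ) 1)) := by
  have : Measurable (phi a) := by unfold phi; fun_prop
  fun_prop

/-- Uniform boundedness principle. -/
lemma uniform_bdd {X : Type*} [NormedAddCommGroup X] [NormedSpace ℂ X] [CompleteSpace X] {s : ℝ}
    (Λ : ℂ → X → ℂ)
    (hadd : ∀ z : ℂ, ‖z‖ < 1 → ∀ c d, Λ z (c + d) = Λ z c + Λ z d)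
    (hsmul : ∀ z : ℂ, ‖z‖ < 1 → ∀ (k : ℂ) c, Λ z (k • c) = k * Λ z c)
    (hcont : ∀ z : ℂ, ‖z‖ < 1 → Continuous (Λ z))
    (hmeas : ∀ c, AEMeasurable (fun z => Λ z c) (dA.restrict (Metric.ball (0:ℂ) 1)))
    (hbdd : ∀ c, ∃ C : ENNReal, C < ⊤ ∧ ∀ a : ℂ, ‖a‖ < 1 → NN (fun z => Λ z c) s a ≤ C) :
    ∃ C : ENNReal, C < ⊤ ∧ ∀ c : X, ‖c‖ ≤ 1 → ∀ a : ℂ, ‖a‖ < 1 → NN (fun z => Λ z c) s a ≤ C := by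
  set E : ℕ → Set X := fun k => {c | ∀ a : ℂ, ‖a‖ < 1 → NN (fun z => Λ z c) s a ≤ k} with hE
  have hcl : ∀ k, IsClosed (E k) := by
    intro k
    apply IsSeqClosed.isClosed
    intro x c hx hxc a ha
    have hfat := lintegral_liminf_le' (μ := dA.restrict (Metric.ball (0:ℂ) 1)) (u := atTop)
      (f := fun j z => ENNReal.ofReal (‖Λ z (x j)‖ ^ 2 * (1 - ‖phi a z‖ ^ 2) ^ s))
      (fun j => NN_aemeas a (hmeas (x j)))
    have h1 : NN (fun z => Λ z c) s a = ∫⁻ z in Metric.ball (0:ℂ) 1, liminf (fun j =>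
        ENNReal.ofReal (‖Λ z (x j)‖ ^ 2 * (1 - ‖phi a z‖ ^ 2) ^ s)) atTop ∂dA := by
      refine setLIntegral_congr_fun measurableSet_ball fun z hz => ?_
      have ht : Tendsto (fun j => Λ z (x j)) atTop (nhds (Λ z c)) :=
        ((hcont z (mem_D.1 hz)).tendsto c).comp hxc
      have := ENNReal.tendsto_ofReal ((ht.norm.pow 2).mul_const ((1 - ‖phi a z‖ ^ 2) ^ s))
      exact this.liminf_eq.symm
    rw [h1]
    refine hfat.trans (liminf_le_of_frequently_le' ?_)
    exact Frequently.of_forall fun j => hx j a ha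
  have hun : ⋃ k, E k = univ := by
    rw [eq_univ_iff_forall]
    intro c
    obtain ⟨C, hC, h⟩ := hbdd c
    obtain ⟨k, hk⟩ := ENNReal.exists_nat_gt hC.ne
    exact mem_iUnion.2 ⟨k, fun a ha => (h a ha).trans hk.le⟩
  obtain ⟨k, x, hx⟩ := nonempty_interior_of_iUnion_of_closed hcl hun
  rw [mem_interior_iff_mem_nhds, Metric.mem_nhds_iff] at hx
  obtain ⟨ε, hε, hb⟩ := hx
  set r : ℝ := ε / 2 with hr
  have hr0 : 0 < r := by positivity
  set K : ENNReal := ENNReal.ofReal (‖((r:ℂ))⁻¹‖ ^ 2) with hK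
  refine ⟨2 * (K * k + K * k), by simp only [hK]; finiteness, fun c hc a ha => ?_⟩
  have hxE : x ∈ E k := hb (mem_ball_self hε)
  have hyE : x + (r:ℂ) • c ∈ E k := by
    apply hb
    rw [mem_ball, dist_eq_norm, add_sub_cancel_left, norm_smul, Complex.norm_real,
      Real.norm_of_nonneg hr0.le]
    nlinarith [norm_nonneg c]
  refine (NN_add_le ha (u := fun z => (r:ℂ)⁻¹ * Λ z (x + (r:ℂ) • c))
    (v := fun z => (-(r:ℂ)⁻¹) * Λ z x) ((hmeas _).const_mul _) ?_).trans ?_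
  · intro z hz
    rw [mem_D] at hz
    have : (r:ℂ) ≠ 0 := by exact_mod_cast hr0.ne'
    rw [hadd z hz, hsmul z hz]
    field_simp
    ring
  · refine mul_le_mul' le_rfl (add_le_add ?_ ?_)
    · exact (NN_const_mul ha _).trans (mul_le_mul' le_rfl (hyE a ha))
    · refine (NN_const_mul ha _).trans ?_
      rw [norm_neg]
      exact mul_le_mul' le_rfl (hxE a ha)

/-- The test function. -/
noncomputable def tf (a z : ℂ) : ℂ := Complex.log (1 - (starRingEnd ℂ) a * z)

lemma tf_hasDeriv {a z : ℂ} (ha : ‖a‖ < 1) (hz : ‖z‖ < 1) : HasDerivAt (tf a) (td a z) z := by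
  unfold tf td
  apply HasDerivAt.clog
  · simpa using ((hasDerivAt_id z).const_mul ((starRingEnd ℂ) a)).const_sub 1
  · apply Complex.mem_slitPlane_iff.2
    left
    have h1 : ‖(starRingEnd ℂ) a * z‖ < 1 := by
      rw [norm_mul, RCLike.norm_conj]; nlinarith [norm_nonneg a, norm_nonneg z]
    have := Complex.re_le_norm ((starRingEnd ℂ) a * z)
    rw [Complex.sub_re, Complex.one_re]; linarith

lemma tf_hol {a : ℂ} (ha : ‖a‖ < 1) : HolOn (tf a) := fun z hz =>
  (tf_hasDeriv ha (mem_D.1 hz)).differentiableAt.differentiableWithinAt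

lemma td_bound {a z : ℂ} (ha : ‖a‖ < 1) (hz : ‖z‖ < 1) : ‖td a z‖ ≤ 1 / (1 - ‖z‖) := by
  have := norm_den_ge_right ha hz
  have h1 : 0 < 1 - ‖z‖ := by linarith
  rw [td, norm_div, norm_neg, RCLike.norm_conj]
  gcongr

lemma tf_zero (a : ℂ) : tf a 0 = 0 := by simp [tf]

lemma tf_bound {a z : ℂ} (ha : ‖a‖ < 1) (hz : ‖z‖ < 1) : ‖tf a z‖ ≤ Real.log (1 / (1 - ‖z‖)) := by
  have := growth (tf_hol ha) (B := 1) (fun w hw => by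
    have h1 : 0 < 1 - ‖w‖ := by linarith
    rw [(tf_hasDeriv ha hw).deriv, mul_comm, ← le_div_iff₀ h1]
    exact td_bound ha hw) hz
  simpa [tf_zero] using this

/-- The sequence space. -/
noncomputable abbrev XX := lp (fun _ : ℕ => ℂ) 1

lemma XX_summable (c : XX) : Summable fun n => ‖c n‖ := by
  have := (memℓp_gen_iff (by simp)).1 (lp.memℓp c)
  simpa using this

lemma XX_norm (c : XX) : ‖c‖ = ∑' n, ‖c n‖ := by
  rw [lp.norm_eq_tsum_rpow (by simp)]; simp

lemma XX_sum {c : XX} {x : ℕ → ℂ} {K : ℝ} (hx : ∀ n, ‖x n‖ ≤ K) :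
    Summable (fun n => c n * x n) := by
  refine Summable.of_norm_bounded ((XX_summable c).mul_right K) fun n => ?_
  rw [norm_mul]; exact mul_le_mul_of_nonneg_left (hx n) (norm_nonneg _)

lemma XX_add {x : ℕ → ℂ} {K : ℝ} (hx : ∀ n, ‖x n‖ ≤ K) (c d : XX) :
    ∑' n, (c + d : XX) n * x n = ∑' n, c n * x n + ∑' n, d n * x n := by
  rw [← (XX_sum hx).tsum_add (XX_sum hx)]
  congr 1; ext n
  simp [add_mul]

lemma XX_smul (x : ℕ → ℂ) (k : ℂ) (c : XX) :
    ∑' n, (k • c : XX) n * x n = k * ∑' n, c n * x n := by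
  rw [← tsum_mul_left]
  congr 1; ext n
  simp [mul_assoc]

lemma XX_bound {x : ℕ → ℂ} {K : ℝ} (hx : ∀ n, ‖x n‖ ≤ K) (c : XX) :
    ‖∑' n, c n * x n‖ ≤ K * ‖c‖ := by
  rw [XX_norm, ← tsum_mul_left]
  refine tsum_of_norm_bounded ((XX_summable c).mul_left K).hasSum fun n => ?_
  rw [norm_mul, mul_comm]; exact mul_le_mul_of_nonneg_right (hx n) (norm_nonneg _)

lemma XX_cont {x : ℕ → ℂ} {K : ℝ} (hx : ∀ n, ‖x n‖ ≤ K) :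
    Continuous fun c : XX => ∑' n, c n * x n := by
  let l : XX →ₗ[ℂ] ℂ :=
    { toFun := fun c => ∑' n, c n * x n
      map_add' := XX_add hx
      map_smul' := fun k c => by simpa using XX_smul x k c }
  exact (l.mkContinuous K (XX_bound hx)).continuous

lemma XX_single (x : ℕ → ℂ) (n : ℕ) : ∑' m, (lp.single 1 n (1:ℂ) : XX) m * x m = x n := by
  rw [tsum_eq_single n]
  · simp
  · intro m hm
    simp [lp.single_apply, hm]

lemma tsum_cs {c : XX} {x : ℕ → ℂ} {K : ℝ} (hx : ∀ n, ‖x n‖ ≤ K) :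
    Summable (fun n => ‖c n‖ * ‖x n‖ ^ 2) ∧
    ‖∑' n, c n * x n‖ ^ 2 ≤ ‖c‖ * ∑' n, ‖c n‖ * ‖x n‖ ^ 2 := by
  have s0 := XX_summable c
  have s2 : Summable (fun n => ‖c n‖ * ‖x n‖ ^ 2) := by
    refine Summable.of_nonneg_of_le (fun n => by positivity) (fun n => ?_) (s0.mul_right (K ^ 2))
    have := hx n
    gcongr
  have s1 : Summable (fun n => ‖c n‖ * ‖x n‖) := by
    refine Summable.of_nonneg_of_le (fun n => by positivity) (fun n => ?_) (s0.mul_right K)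
    have := hx n
    gcongr
  refine ⟨s2, ?_⟩
  have h1 : ‖∑' n, c n * x n‖ ≤ ∑' n, ‖c n‖ * ‖x n‖ :=
    tsum_of_norm_bounded s1.hasSum fun n => by rw [norm_mul]
  set S := ∑' n, ‖c n‖ * ‖x n‖
  set T := ∑' n, ‖c n‖ * ‖x n‖ ^ 2
  have hS : S ^ 2 ≤ ‖c‖ * T := by
    have := discrim_le_zero (a := ‖c‖) (b := -2 * S) (c := T) fun m => by
      have e : ‖c‖ * (m * m) + -2 * S * m + T = ∑' n, ‖c n‖ * (‖x n‖ - m) ^ 2 := by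
        rw [XX_norm, ← tsum_mul_right, show -2 * S * m = (-2 * m) * S by ring, ← tsum_mul_left,
          ← (s0.mul_right (m * m)).tsum_add (s1.mul_left (-2 * m)),
          ← ((s0.mul_right (m * m)).add (s1.mul_left (-2 * m))).tsum_add s2]
        congr 1; ext n; ring
      rw [e]
      exact tsum_nonneg fun n => by positivity
    rw [discrim] at this
    linarith
  exact (pow_le_pow_left₀ (norm_nonneg _) h1 2).trans hS

/-- The combined function. -/
noncomputable def FF (a : ℕ → ℂ) (c : XX) (z : ℂ) : ℂ := ∑' n, c n * tf (a n) z

lemma FF_hol {a : ℕ → ℂ} (ha : ∀ n, ‖a n‖ < 1) (c : XX) : HolOn (FF a c) ∧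
    ∀ z : ℂ, ‖z‖ < 1 → deriv (FF a c) z = ∑' n, c n * td (a n) z := by
  have key : ∀ z : ℂ, ‖z‖ < 1 → DifferentiableAt ℂ (FF a c) z ∧
      deriv (FF a c) z = ∑' n, c n * td (a n) z := by
    intro z hz
    obtain ⟨r, hr, hr1⟩ := exists_between hz
    have hsub : ∀ w ∈ Metric.ball (0:ℂ) r, ‖w‖ < r := fun w hw => by simpa using hw
    have hz' : z ∈ Metric.ball (0:ℂ) r := by simpa using hr
    have hu := (XX_summable c).mul_right (Real.log (1 / (1 - r)))
    have hd : ∀ n, DifferentiableOn ℂ (fun w => c n * tf (a n) w) (Metric.ball (0:ℂ) r) :=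
      fun n w hw => ((tf_hasDeriv (ha n) ((hsub w hw).trans hr1)).const_mul
        (c n)).differentiableAt.differentiableWithinAt
    have hb : ∀ n, ∀ w ∈ Metric.ball (0:ℂ) r, ‖c n * tf (a n) w‖ ≤
        ‖c n‖ * Real.log (1 / (1 - r)) := by
      intro n w hw
      have h1 := hsub w hw
      have h2 := tf_bound (ha n) (h1.trans hr1)
      rw [norm_mul]
      refine mul_le_mul_of_nonneg_left (h2.trans ?_) (norm_nonneg _)
      have h3 : 0 < 1 - r := by linarith
      have h4 : 0 < 1 - ‖w‖ := by linarith
      apply Real.log_le_log (by positivity)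
      gcongr
    refine ⟨(differentiableOn_tsum_of_summable_norm hu hd isOpen_ball hb).differentiableAt
      (isOpen_ball.mem_nhds hz'), ?_⟩
    have := (hasSum_deriv_of_summable_norm hu hd isOpen_ball hb hz').tsum_eq
    unfold FF
    rw [← this]
    congr 1; ext n
    exact ((tf_hasDeriv (ha n) hz).const_mul (c n)).deriv
  exact ⟨fun z hz => (key z (mem_D.1 hz)).1.differentiableWithinAt, fun z hz => (key z hz).2⟩

lemma FF_mem {s : ℝ} (hs : 0 < s) (hs1 : s ≤ 1) {a : ℕ → ℂ} (ha : ∀ n, ‖a n‖ < 1) (c : XX) :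
    FF a c ∈ Qs s := by
  obtain ⟨h1, h2⟩ := FF_hol ha c
  have hSK := SK_lt_top hs
  refine mem_Qs.2 ⟨h1, ENNReal.ofReal ‖c‖ * (ENNReal.ofReal ‖c‖ * (4 * SK s)), ?_, fun b hb => ?_⟩
  · finiteness
  rw [NN_congr fun z hz => h2 z (mem_D.1 hz)]
  calc NN (fun z => ∑' n, c n * td (a n) z) s b
      ≤ ∫⁻ z in Metric.ball (0:ℂ) 1, ENNReal.ofReal ‖c‖ * ∑' n, ENNReal.ofReal ‖c n‖ *
        ENNReal.ofReal (‖td (a n) z‖ ^ 2 * (1 - ‖phi b z‖ ^ 2) ^ s) ∂dA := by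
        refine setLIntegral_mono' measurableSet_ball fun z hz => ?_
        rw [mem_D] at hz
        have hp : 0 ≤ (1 - ‖phi b z‖ ^ 2) ^ s := Real.rpow_nonneg (one_sub_phi_pos hb hz).le _
        obtain ⟨q1, q2⟩ := tsum_cs (c := c) (x := fun n => td (a n) z) fun n => td_bound (ha n) hz
        have e : ∑' n, ENNReal.ofReal ‖c n‖ *
            ENNReal.ofReal (‖td (a n) z‖ ^ 2 * (1 - ‖phi b z‖ ^ 2) ^ s) =
            ENNReal.ofReal ((∑' n, ‖c n‖ * ‖td (a n) z‖ ^ 2) * (1 - ‖phi b z‖ ^ 2) ^ s) := by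
          rw [← tsum_mul_right, ENNReal.ofReal_tsum_of_nonneg (fun n => by positivity)
            (q1.mul_right _)]
          congr 1; ext n
          rw [← ENNReal.ofReal_mul (norm_nonneg _), mul_assoc]
        rw [e, ← ENNReal.ofReal_mul (norm_nonneg _)]
        apply ENNReal.ofReal_le_ofReal
        rw [← mul_assoc]
        exact mul_le_mul_of_nonneg_right q2 hp
    _ = ENNReal.ofReal ‖c‖ * ∑' n, ENNReal.ofReal ‖c n‖ * NN (td (a n)) s b := by
        rw [lintegral_const_mul' _ _ (by simp), lintegral_tsum]
        · congr 2; ext n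
          rw [lintegral_const_mul' _ _ (by simp)]; rfl
        · intro n
          exact (NN_aemeas b (aemeas_of_contOn (td_cont (ha n)))).const_mul _
    _ ≤ ENNReal.ofReal ‖c‖ * ∑' n, ENNReal.ofReal ‖c n‖ * (4 * SK s) := by
        refine mul_le_mul' le_rfl (ENNReal.tsum_le_tsum fun n => ?_)
        exact mul_le_mul' le_rfl (td_NN hs hs1 (ha n) hb)
    _ = _ := by
        rw [ENNReal.tsum_mul_right, ← ENNReal.ofReal_tsum_of_nonneg (fun n => norm_nonneg _)
          (XX_summable c), ← XX_norm]

/-- Uniform boundedness on the test functions. -/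
lemma test_bdd {s₁ s₂ : ℝ} (hs : 0 < s₁) (hs1 : s₁ ≤ 1) {α β : ℂ → ℂ} (hα : HolOn α) (hβ : HolOn β)
    (h : ∀ f ∈ Qs s₁, ∃ C : ENNReal, C < ⊤ ∧ ∀ a : ℂ, ‖a‖ < 1 →
      NN (fun z => α z * f z + β z * deriv f z) s₂ a ≤ C) :
    ∃ C : ENNReal, C < ⊤ ∧ ∀ a : ℂ, ‖a‖ < 1 → ∀ b : ℂ, ‖b‖ < 1 →
      NN (fun z => α z * tf a z + β z * td a z) s₂ b ≤ C := by
  by_contra hcon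
  push Not at hcon
  have hcon' : ∀ n : ℕ, ∃ a : ℂ, ‖a‖ < 1 ∧ ∃ b : ℂ, ‖b‖ < 1 ∧
      (n : ENNReal) < NN (fun z => α z * tf a z + β z * td a z) s₂ b := fun n =>
    hcon n (ENNReal.natCast_lt_top n)
  choose a ha b hb hab using hcon'
  have X1 : ∀ z : ℂ, ‖z‖ < 1 → ∀ n, ‖tf (a n) z‖ ≤ Real.log (1 / (1 - ‖z‖)) :=
    fun z hz n => tf_bound (ha n) hz
  have X2 : ∀ z : ℂ, ‖z‖ < 1 → ∀ n, ‖td (a n) z‖ ≤ 1 / (1 - ‖z‖) :=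
    fun z hz n => td_bound (ha n) hz
  set Λ : ℂ → XX → ℂ := fun z c => α z * (∑' n, c n * tf (a n) z) +
    β z * (∑' n, c n * td (a n) z) with hΛ
  have hΛF : ∀ c, ∀ z ∈ Metric.ball (0:ℂ) 1,
      Λ z c = α z * FF a c z + β z * deriv (FF a c) z := by
    intro c z hz
    rw [(FF_hol ha c).2 z (mem_D.1 hz)]
    rfl
  obtain ⟨C, hC, hall⟩ := uniform_bdd (s := s₂) Λ
    (fun z hz c d => by
      simp only [hΛ]
      rw [XX_add (X1 z hz), XX_add (X2 z hz)]; ring)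
    (fun z hz k c => by
      simp only [hΛ]
      rw [XX_smul, XX_smul]; ring)
    (fun z hz => ((XX_cont (X1 z hz)).const_mul _).add ((XX_cont (X2 z hz)).const_mul _))
    (fun c => by
      apply aemeas_of_contOn
      have h1 := (FF_hol ha c).1
      refine ContinuousOn.congr ?_ (hΛF c)
      exact (hα.cont.mul h1.cont).add (hβ.cont.mul h1.deriv'.cont))
    (fun c => by
      obtain ⟨C, hC, h⟩ := h _ (FF_mem hs hs1 ha c)
      refine ⟨C, hC, fun a ha => ?_⟩
      rw [NN_congr (hΛF c)]
      exact h a ha)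
  obtain ⟨k, hk⟩ := ENNReal.exists_nat_gt hC.ne
  have h1 := hall (lp.single 1 k (1:ℂ)) (by rw [lp.norm_single (by simp)]; simp) (b k) (hb k)
  have h2 := hab k
  have h3 : NN (fun z => Λ z (lp.single 1 k (1:ℂ))) s₂ (b k) =
      NN (fun z => α z * tf (a k) z + β z * td (a k) z) s₂ (b k) :=
    NN_congr fun z hz => by
      simp only [hΛ]
      rw [XX_single (fun n => tf (a n) z), XX_single (fun n => td (a n) z)]
  rw [h3] at h1
  exact absurd (h2.trans_le h1) (not_lt.2 hk.le)

lemma tf_norm_ge (a z : ℂ) : |Real.log ‖1 - (starRingEnd ℂ) a * z‖| ≤ ‖tf a z‖ := by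
  have := Complex.abs_re_le_norm (tf a z)
  rwa [tf, Complex.log_re] at this

/-- The pointwise comparison. -/
lemma weight_cmp {s : ℝ} (hs : 0 < s) {a : ℂ} (ha : ‖a‖ < 1) : ∃ b : ℂ, ‖b‖ < 1 ∧
    ∀ z : ℂ, ‖z‖ < 1 → Real.log (2 / (1 - ‖a‖)) ^ 2 * (1 - ‖phi a z‖ ^ 2) ^ s ≤
      8 * ‖tf a z‖ ^ 2 * (1 - ‖phi a z‖ ^ 2) ^ s + (2 * (1 - ‖phi a z‖ ^ 2) ^ s +
        (8 ^ s * 2 ^ (s / 2) * (16 / s ^ 2)) * (1 - ‖phi b z‖ ^ 2) ^ s) := by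
  set d := 1 - ‖a‖ with hd
  have hd0 : 0 < d := by rw [hd]; linarith
  have hd1 : d ≤ 1 := by rw [hd]; linarith [norm_nonneg a]
  have hq0 : 0 < √d := Real.sqrt_pos.2 hd0
  have hq1 : √d ≤ 1 := Real.sqrt_le_one.2 hd1
  have hqq : √d ^ 2 = d := Real.sq_sqrt hd0.le
  have hbn : ‖((1 - √d : ℝ) : ℂ) * a‖ = (1 - √d) * ‖a‖ := by
    rw [norm_mul, Complex.norm_real, Real.norm_of_nonneg (by linarith)]
  have hb : ‖((1 - √d : ℝ) : ℂ) * a‖ < 1 := by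
    rw [hbn]; nlinarith [norm_nonneg a]
  refine ⟨((1 - √d : ℝ) : ℂ) * a, hb, fun z hz => ?_⟩
  set b := ((1 - √d : ℝ) : ℂ) * a with hbd
  have hKa := one_sub_phi_pos ha hz
  have hKb := one_sub_phi_pos hb hz
  have hKa' := Real.rpow_pos_of_pos hKa s
  have hKb' := Real.rpow_pos_of_pos hKb s
  have hx := norm_den_pos ha hz
  have htf := tf_norm_ge a z
  set x := ‖1 - (starRingEnd ℂ) a * z‖ with hxd
  set L := Real.log (2 / d) with hL
  have hLe : L = Real.log 2 - Real.log d := by rw [hL, Real.log_div (by norm_num) hd0.ne']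
  have hl1 := Real.log_two_gt_d9
  have hl2 := Real.log_two_lt_d9
  have hL0 : 0 < L := by
    have := Real.log_nonpos hd0.le hd1
    linarith
  by_cases hcase : x ≤ √d
  · have h1 : Real.log x ≤ Real.log d / 2 := by
      rw [← Real.log_sqrt hd0.le]; exact Real.log_le_log hx hcase
    have h2 : L ≤ 2 * ‖tf a z‖ + Real.log 2 := by
      have := neg_abs_le (Real.log x)
      linarith
    have h3 : L ^ 2 ≤ 8 * ‖tf a z‖ ^ 2 + 2 := by
      nlinarith [sq_nonneg (2 * ‖tf a z‖ - Real.log 2), norm_nonneg (tf a z)]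
    have h4 := mul_le_mul_of_nonneg_right h3 hKa'.le
    have h5 : 0 ≤ (8 ^ s * 2 ^ (s / 2) * (16 / s ^ 2)) * (1 - ‖phi b z‖ ^ 2) ^ s := by positivity
    linarith
  · push Not at hcase
    have hy := norm_den_pos hb hz
    have hyx : ‖1 - (starRingEnd ℂ) b * z‖ ≤ 2 * x := by
      have e : 1 - (starRingEnd ℂ) b * z = (1 - (starRingEnd ℂ) a * z) +
          ((√d : ℝ) : ℂ) * ((starRingEnd ℂ) a * z) := by
        rw [hbd, map_mul, Complex.conj_ofReal]; push_cast; ring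
      rw [e]
      refine (norm_add_le _ _).trans ?_
      rw [norm_mul, norm_mul, RCLike.norm_conj, Complex.norm_real, Real.norm_of_nonneg hq0.le]
      have h1 : ‖a‖ * ‖z‖ ≤ 1 := by nlinarith [norm_nonneg a, norm_nonneg z]
      nlinarith
    have hz2 : 0 < 1 - ‖z‖ ^ 2 := by nlinarith [norm_nonneg z]
    have hbase : 1 - ‖phi a z‖ ^ 2 ≤ 8 * √d * (1 - ‖phi b z‖ ^ 2) := by
      rw [one_sub_phi ha hz, one_sub_phi hb hz, ← hxd]
      have h1 : (1 - ‖a‖ ^ 2) ≤ 2 * √d * √d := by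
        have : √d * √d = 1 - ‖a‖ := by rw [← sq, hqq]
        nlinarith [norm_nonneg a]
      have h2 : √d ≤ 1 - ‖b‖ ^ 2 := by
        have : ‖b‖ ≤ 1 - √d := by rw [hbn]; nlinarith [norm_nonneg a]
        nlinarith [norm_nonneg b]
      calc (1 - ‖a‖ ^ 2) * (1 - ‖z‖ ^ 2) / x ^ 2 ≤ (2 * √d * √d) * (1 - ‖z‖ ^ 2) / x ^ 2 := by
            apply div_le_div_of_nonneg_right _ (by positivity)
            exact mul_le_mul_of_nonneg_right h1 hz2.le
        _ = 8 * √d * (√d * (1 - ‖z‖ ^ 2) / (2 * x) ^ 2) := by field_simp; norm_num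
        _ ≤ 8 * √d * ((1 - ‖b‖ ^ 2) * (1 - ‖z‖ ^ 2) / (2 * x) ^ 2) := by
            apply mul_le_mul_of_nonneg_left _ (by positivity)
            apply div_le_div_of_nonneg_right _ (by positivity)
            exact mul_le_mul_of_nonneg_right h2 hz2.le
        _ ≤ _ := by
            apply mul_le_mul_of_nonneg_left _ (by positivity)
            apply div_le_div_of_nonneg_left _ (by positivity) (pow_le_pow_left₀ hy.le hyx 2)
            have : 0 ≤ 1 - ‖b‖ ^ 2 := by linarith
            positivity
    have h1 : (1 - ‖phi a z‖ ^ 2) ^ s ≤ 8 ^ s * d ^ (s / 2) * (1 - ‖phi b z‖ ^ 2) ^ s := by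
      refine (Real.rpow_le_rpow hKa.le hbase hs.le).trans ?_
      rw [Real.mul_rpow (by positivity) hKb.le, Real.mul_rpow (by norm_num) hq0.le,
        Real.sqrt_eq_rpow, ← Real.rpow_mul hd0.le, show 1 / 2 * s = s / 2 by ring]
    have h2 : L ^ 2 * d ^ (s / 2) ≤ 2 ^ (s / 2) * (16 / s ^ 2) := by
      have h3 : L ≤ (2 / d) ^ (s / 4) / (s / 4) := Real.log_le_rpow_div (by positivity) (by positivity)
      have h4 : L ^ 2 ≤ ((2 / d) ^ (s / 4) / (s / 4)) ^ 2 := pow_le_pow_left₀ hL0.le h3 2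
      have h5 : ((2 / d) ^ (s / 4) / (s / 4)) ^ 2 = 2 ^ (s / 2) / d ^ (s / 2) * (16 / s ^ 2) := by
        rw [div_pow, ← Real.rpow_natCast, ← Real.rpow_mul (by positivity),
          show s / 4 * ((2:ℕ):ℝ) = s / 2 by push_cast; ring, Real.div_rpow (by norm_num) hd0.le]
        field_simp; norm_num
      rw [h5] at h4
      have h6 : 0 < d ^ (s / 2) := Real.rpow_pos_of_pos hd0 _
      calc _ ≤ 2 ^ (s / 2) / d ^ (s / 2) * (16 / s ^ 2) * d ^ (s / 2) :=
            mul_le_mul_of_nonneg_right h4 h6.le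
        _ = _ := by field_simp
    have h7 : L ^ 2 * (1 - ‖phi a z‖ ^ 2) ^ s ≤
        (8 ^ s * 2 ^ (s / 2) * (16 / s ^ 2)) * (1 - ‖phi b z‖ ^ 2) ^ s := by
      calc _ ≤ L ^ 2 * (8 ^ s * d ^ (s / 2) * (1 - ‖phi b z‖ ^ 2) ^ s) :=
            mul_le_mul_of_nonneg_left h1 (by positivity)
        _ = (L ^ 2 * d ^ (s / 2)) * (8 ^ s * (1 - ‖phi b z‖ ^ 2) ^ s) := by ring
        _ ≤ (2 ^ (s / 2) * (16 / s ^ 2)) * (8 ^ s * (1 - ‖phi b z‖ ^ 2) ^ s) :=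
            mul_le_mul_of_nonneg_right h2 (by positivity)
        _ = _ := by ring
    have h8 : 0 ≤ 8 * ‖tf a z‖ ^ 2 * (1 - ‖phi a z‖ ^ 2) ^ s := by positivity
    linarith

lemma one_mem_Qs (s : ℝ) : (fun _ => 1 : ℂ → ℂ) ∈ Qs s := by
  refine mem_Qs.2 ⟨differentiableOn_const _, 0, by simp, fun a ha => ?_⟩
  simp [NN]

lemma nec_T {s₁ s₂ : ℝ} (hs : 0 < s₁) (hs1 : s₁ ≤ 1) (hs2 : 0 < s₂) {g : ℂ → ℂ} (hg : HolOn g)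
    (h : ∀ f ∈ Qs s₁, ∃ C : ENNReal, C < ⊤ ∧ ∀ a : ℂ, ‖a‖ < 1 →
      NN (fun z => deriv g z * f z) s₂ a ≤ C) : g ∈ QsLog s₂ 1 := by
  obtain ⟨C1, hC1, h1⟩ := h _ (one_mem_Qs s₁)
  simp only [mul_one] at h1
  obtain ⟨C2, hC2, h2⟩ := test_bdd (s₂ := s₂) hs hs1 hg.deriv' (β := fun _ => 0)
    (differentiableOn_const _) (fun f hf => by simpa using h f hf)
  simp only [zero_mul, add_zero] at h2
  set E : ℝ := 8 ^ s₂ * 2 ^ (s₂ / 2) * (16 / s₂ ^ 2) with hE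
  have hE0 : 0 ≤ E := by positivity
  refine mem_QsLog.2 ⟨hg, ENNReal.ofReal 8 * C2 + (ENNReal.ofReal 2 * C1 + ENNReal.ofReal E * C1),
    by finiteness, fun a ha => ?_⟩
  obtain ⟨b, hb, hw⟩ := weight_cmp hs2 ha
  have hgm := aemeas_of_contOn hg.deriv'.cont
  have htm : AEMeasurable (fun z => deriv g z * tf a z) (dA.restrict (Metric.ball (0:ℂ) 1)) :=
    aemeas_of_contOn (hg.deriv'.cont.mul (tf_hol ha).cont)
  refine le_trans ?_ (add_le_add (mul_le_mul' le_rfl (h2 a ha a ha))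
    (add_le_add (mul_le_mul' le_rfl (h1 a ha)) (mul_le_mul' le_rfl (h1 b hb))))
  unfold NN
  rw [← lintegral_const_mul' _ _ (by simp), ← lintegral_const_mul' _ _ (by simp),
    ← lintegral_const_mul' _ _ (by simp), ← lintegral_const_mul' _ _ (by simp),
    ← lintegral_add_left' ((NN_aemeas a hgm).const_mul _),
    ← lintegral_add_left' ((NN_aemeas a htm).const_mul _)]
  refine setLIntegral_mono' measurableSet_ball fun z hz => ?_
  rw [mem_D] at hz
  have hKa' := Real.rpow_pos_of_pos (one_sub_phi_pos ha hz) s₂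
  have hKb' := Real.rpow_pos_of_pos (one_sub_phi_pos hb hz) s₂
  rw [← ENNReal.ofReal_mul (by positivity), ← ENNReal.ofReal_mul (by positivity),
    ← ENNReal.ofReal_mul (by positivity), ← ENNReal.ofReal_mul (by positivity),
    ← ENNReal.ofReal_add (by positivity) (by positivity),
    ← ENNReal.ofReal_add (by positivity) (by positivity)]
  apply ENNReal.ofReal_le_ofReal
  have := mul_le_mul_of_nonneg_left (hw z hz) (sq_nonneg ‖deriv g z‖)
  rw [norm_mul, mul_pow]
  linarith

lemma hinf_of {g : ℂ → ℂ} (hg : HolOn g) {K : ℝ}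
    (h : ∀ a : ℂ, ‖a‖ < 1 → 1 / 2 ≤ ‖a‖ → ‖g a‖ ≤ K) : g ∈ Hinf := by
  have hsub : Metric.closedBall (0:ℂ) (1 / 2) ⊆ Metric.ball (0:ℂ) 1 :=
    closedBall_subset_ball (by norm_num)
  obtain ⟨C, hC⟩ := (isCompact_closedBall (0:ℂ) (1 / 2)).exists_bound_of_continuousOn
    (hg.cont.mono hsub)
  refine ⟨hg, max K C, fun z hz => ?_⟩
  by_cases hz2 : 1 / 2 ≤ ‖z‖
  · exact (h z (mem_D.1 hz) hz2).trans (le_max_left _ _)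
  · exact (hC z (by simp; linarith)).trans (le_max_right _ _)

lemma conj_self_norm {a : ℂ} (ha : ‖a‖ < 1) : ‖1 - (starRingEnd ℂ) a * a‖ = 1 - ‖a‖ ^ 2 := by
  have : 1 - (starRingEnd ℂ) a * a = ((1 - ‖a‖ ^ 2 : ℝ) : ℂ) := by
    rw [mul_comm, Complex.mul_conj, Complex.normSq_eq_norm_sq]; push_cast; ring
  rw [this, Complex.norm_real, Real.norm_of_nonneg]
  nlinarith [norm_nonneg a]

lemma td_hol {a : ℂ} (ha : ‖a‖ < 1) : HolOn (td a) := by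
  unfold td
  intro z hz
  have := den_ne ha (mem_D.1 hz)
  apply DifferentiableAt.differentiableWithinAt
  fun_prop (disch := assumption)

lemma nec_I {s₁ s₂ : ℝ} (hs : 0 < s₁) (hs1 : s₁ ≤ 1) (hs2 : 0 < s₂) {g : ℂ → ℂ} (hg : HolOn g)
    (h : ∀ f ∈ Qs s₁, ∃ C : ENNReal, C < ⊤ ∧ ∀ a : ℂ, ‖a‖ < 1 →
      NN (fun z => g z * deriv f z) s₂ a ≤ C) : g ∈ Hinf := by
  obtain ⟨C2, hC2, h2⟩ := test_bdd (s₂ := s₂) hs hs1 (α := fun _ => 0) 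
    (differentiableOn_const _) hg (fun f hf => by simpa using h f hf)
  simp only [zero_mul, zero_add] at h2
  refine hinf_of hg (K := 4 * BB s₂ C2) fun a ha ha2 => ?_
  have h3 := bloch_of_NN (u := fun z => g z * td a z) (DifferentiableOn.mul hg (td_hol ha)) hs2 hC2
    ha (h2 a ha a ha)
  simp only [norm_mul, td, norm_div, norm_neg, RCLike.norm_conj, conj_self_norm ha] at h3
  have hp : 0 < 1 - ‖a‖ := by linarith
  have e : (1 - ‖a‖) * (‖g a‖ * (‖a‖ / (1 - ‖a‖ ^ 2))) = ‖g a‖ * ‖a‖ / (1 + ‖a‖) := by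
    rw [show 1 - ‖a‖ ^ 2 = (1 - ‖a‖) * (1 + ‖a‖) by ring]
    field_simp
  rw [e, div_le_iff₀ (by positivity)] at h3
  have := BB_nonneg s₂ C2
  nlinarith [norm_nonneg (g a)]

lemma log_cmp {r : ℝ} (h1 : 1 / 2 ≤ r) (h2 : r < 1) :
    Real.log (1 / (1 - r)) ≤ 4 * |Real.log (1 - r ^ 2)| ∧ 0 < Real.log (1 / (1 - r)) := by
  have p1 : 0 < 1 - r := by linarith
  have p2 : 0 < 1 + r := by linarith
  have p3 : 0 < 1 - r ^ 2 := by nlinarith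
  have e : Real.log (1 - r ^ 2) = Real.log (1 - r) + Real.log (1 + r) := by
    rw [← Real.log_mul p1.ne' p2.ne']; congr 1; ring
  have e2 : Real.log (1 / (1 - r)) = - Real.log (1 - r) := by rw [one_div, Real.log_inv]
  have h3 : 3 * Real.log (1 - r ^ 2) + Real.log (1 + r) ≤ 0 := by
    have q1 : Real.log (1 - r ^ 2) ≤ Real.log (3 / 4) := Real.log_le_log p3 (by nlinarith)
    have q2 : Real.log (1 + r) ≤ Real.log 2 := Real.log_le_log p2 (by linarith)
    have q3 : 3 * Real.log (3 / 4) + Real.log 2 = Real.log ((3 / 4) ^ 3 * 2) := by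
      rw [Real.log_mul (by norm_num) (by norm_num), Real.log_pow]; push_cast; ring
    have q4 : Real.log ((3 / 4) ^ 3 * 2) ≤ 0 := Real.log_nonpos (by norm_num) (by norm_num)
    linarith
  have h4 : Real.log (1 - r) < 0 := Real.log_neg p1 (by linarith)
  have h5 := neg_le_abs (Real.log (1 - r ^ 2))
  constructor <;> linarith

lemma nec_M {s₁ s₂ : ℝ} (hs : 0 < s₁) (hs1 : s₁ ≤ 1) (hs2 : 0 < s₂) {g : ℂ → ℂ} (hg : HolOn g)
    (h : ∀ f ∈ Qs s₁, ∃ C : ENNReal, C < ⊤ ∧ ∀ a : ℂ, ‖a‖ < 1 →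
      NN (fun z => deriv g z * f z + g z * deriv f z) s₂ a ≤ C) : g ∈ Hinf := by
  obtain ⟨C, hC, h2⟩ := test_bdd (s₂ := s₂) hs hs1 hg.deriv' hg h
  refine hinf_of hg (K := 4 * BB s₂ C) fun a ha ha2 => ?_
  obtain ⟨m1, m2⟩ := Mg_hol hg (tf_hol ha)
  have h3 := growth_NN m1 hs2 hC (fun b hb => by
    rw [NN_congr (v := fun z => deriv g z * tf a z + g z * td a z)]
    · exact h2 a ha b hb
    · intro z hz
      rw [m2 z (mem_D.1 hz), (tf_hasDeriv ha (mem_D.1 hz)).deriv]) ha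
  simp only [Mg, tf_zero, mul_zero, sub_zero, norm_mul] at h3
  have h4 := tf_norm_ge a a
  rw [conj_self_norm ha] at h4
  obtain ⟨h5, h6⟩ := log_cmp ha2 ha
  have h7 : ‖g a‖ * Real.log (1 / (1 - ‖a‖)) ≤ (4 * BB s₂ C) * Real.log (1 / (1 - ‖a‖)) := by
    have := mul_le_mul_of_nonneg_left (h5.trans (mul_le_mul_of_nonneg_left h4 (by norm_num)))
      (norm_nonneg (g a))
    linarith
  exact le_of_mul_le_mul_right h7 h6

/-- For `0 < s₁ ≤ s₂ ≤ 1` and `g` holomorphic on the unit disc: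
(i) `T_g` maps `Q_{s₁}` into `Q_{s₂}` iff `g ∈ Q_{s₂,log,1}`;
(ii) `I_g` maps `Q_{s₁}` into `Q_{s₂}` iff `g ∈ H^∞`;
(iii) `M_g` maps `Q_{s₁}` into `Q_{s₂}` iff `g ∈ Q_{s₂,log,1} ∩ H^∞`. -/
theorem stmt15 (s₁ s₂ : ℝ) (hs0 : 0 < s₁) (hs12 : s₁ ≤ s₂) (hs2 : s₂ ≤ 1)
    (g : ℂ → ℂ) (hg : HolOn g) :
    (MapsInto (Tg g) (Qs s₁) (Qs s₂) ↔ g ∈ QsLog s₂ 1) ∧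
    (MapsInto (Ig g) (Qs s₁) (Qs s₂) ↔ g ∈ Hinf) ∧
    (MapsInto (Mg g) (Qs s₁) (Qs s₂) ↔ g ∈ QsLog s₂ 1 ∩ Hinf) := by
  have hp2 : 0 < s₂ := hs0.trans_le hs12
  have hp1 : s₁ ≤ 1 := hs12.trans hs2
  refine ⟨⟨fun h => ?_, fun h f hf => ?_⟩, ⟨fun h => ?_, fun h f hf => ?_⟩,
    ⟨fun h => ?_, fun h f hf => ?_⟩⟩
  · exact nec_T hs0 hp1 hp2 hg fun f hf => (Tg_mem hg hf.1).1 (h f hf)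
  · exact (Tg_mem hg hf.1).2 (suff_T hp2 h (Qs_mono hs12 hf))
  · exact nec_I hs0 hp1 hp2 hg fun f hf => (Ig_mem hg hf.1).1 (h f hf)
  · exact (Ig_mem hg hf.1).2 (suff_I h (Qs_mono hs12 hf))
  · have hM : ∀ f ∈ Qs s₁, ∃ C : ENNReal, C < ⊤ ∧ ∀ a : ℂ, ‖a‖ < 1 →
        NN (fun z => deriv g z * f z + g z * deriv f z) s₂ a ≤ C :=
      fun f hf => (Mg_mem hg hf.1).1 (h f hf)
    have hinf := nec_M hs0 hp1 hp2 hg hM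
    refine ⟨nec_T hs0 hp1 hp2 hg fun f hf => ?_, hinf⟩
    have hfh : HolOn f := hf.1
    obtain ⟨C, hC, h1⟩ := suff_I hinf (Qs_mono hs12 hf)
    refine bdd_add (u := fun z => deriv g z * f z + g z * deriv f z)
      (v := fun z => (-1) * (g z * deriv f z)) ?_ (fun z hz => by ring) (hM f hf)
      ⟨C, hC, fun a ha => ?_⟩
    · exact (DifferentiableOn.mul hg.deriv' hfh).add (DifferentiableOn.mul hg hfh.deriv')
    · refine (NN_const_mul ha _).trans ?_
      simpa using h1 a ha
  · refine (Mg_mem hg hf.1).2 ?_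
    have hfh : HolOn f := hf.1
    exact bdd_add (u := fun z => deriv g z * f z) (DifferentiableOn.mul hg.deriv' hfh)
      (fun z hz => rfl) (suff_T hp2 h.1 (Qs_mono hs12 hf)) (suff_I h.2 (Qs_mono hs12 hf))
end
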